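/- Let (η, α, U, A, φ, σ) be a solution of the Gowdy symmetric IIA system on (T₋,T₊) with 0 < T₋ < t_i < T₊ < ∞. Assume there is a constant λ̄ with |λ| ≤ λ̄ < 1/2 and that the timelike convergence condition φ̇² + e^{2λφ}σ̇² ≥ (1/2)αQ²e^{2(η+λφ−U)} holds at every point. Then the functions U, A, φ, σ and their first partial derivatives U̇, U', Ȧ, A', φ̇, φ', σ̇, σ' are bounded on (T₋,t_i] × S¹. -/

import Mathlib

/-!
Write `V = α Q² e^{2λφ + 2(η − U)}`, let `𝓔` be the energy density, and let `E₊`, `E₋` be the null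
energy densities, i.e. the wave-map norms squared of `(∂ₜ ± √α ∂_θ)(U, A, φ, σ)`, so that
`𝓔 = (E₊ + E₋)/2`. The proof has three ingredients.

*Energy.* The total energy `∫ (𝓔 + V/4)/√α dθ` grows towards the past, but `t²` times it does not
(`Etot_ge`, `Etot_le`), so it is bounded above and below on `(T₋, t_i]`. Moreover `α` grows
towards the past. By the momentum constraint `∂_θ log V` is controlled by `(𝓔 + 1)/√α`, hence
`V(t, ·)` is comparable to `V(t, 0)` uniformly in `t` (`exists_harnack`).

*Integrability of `V` in time.* The timelike convergence condition gives `V ≤ 8 𝓔`, so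
`∫ 𝓔/√α dθ` is bounded below by a multiple of the total energy. The quantity `S = ∫ V/√α dθ`
satisfies `∂ₜ(V/√α) = (V/√α)(2t𝓔 + 2λφ̇ − 2U̇)`, whence `Ṡ ≥ c V(t, 0) − C S`. As `S ≥ 0`, the integral
of `V(t, 0)` over `(T₋, t_i]` is finite (`exists_integral_V_bound`).

*Maximum principle.* `E₊` and `E₋` satisfy transport equations along the opposite null
directions (`Es_transport`) whose sources are at most linear in `E₊ + E₋ + 1`, with a coefficient
`g(t)` that is a constant plus a multiple of `V(t, 0)`, hence integrable. After multiplication of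
`E± + 1` by `exp(2 ∫ g)` the larger one increases strictly along its null direction, so both are
bounded by their values at `t_i` (`max_principle`, `exists_Es_bound`). As `α` is bounded below, this
bounds the derivatives of `U` and `φ`, then `U` and `φ`, and then `A` and `σ`, whose weights in the
energy are now bounded away from `0` (`fields_bounded`).
-/

noncomputable section

open Real Set MeasureTheory Filter

/-- Partial derivative in the first (time) variable. -/
def pt (f : ℝ → ℝ → ℝ) : ℝ → ℝ → ℝ := fun t θ => deriv (fun s => f s θ) t

/-- Partial derivative in the second (angle) variable. -/
def pth (f : ℝ → ℝ → ℝ) : ℝ → ℝ → ℝ := fun t θ => deriv (fun x => f t x) θ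

/-- The full Gowdy symmetric IIA system (both constraints, the equation for `α`,
and the four evolution equations) holding at all times in `S` (dot = `pt`,
prime = `pth`). -/
structure IsGowdyIIA (Q lam : ℝ) (S : Set ℝ) (η α U A φ σ : ℝ → ℝ → ℝ) : Prop where
  alpha_pos : ∀ t ∈ S, ∀ θ : ℝ, 0 < α t θ
  constraint_t : ∀ t ∈ S, ∀ θ : ℝ,
    pt η t θ / t =
      (pt U t θ) ^ 2 + α t θ * (pth U t θ) ^ 2
      + exp (4 * U t θ) / (4 * t ^ 2) * ((pt A t θ) ^ 2 + α t θ * (pth A t θ) ^ 2)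
      + (1 / 4) * ((pt φ t θ) ^ 2 + α t θ * (pth φ t θ) ^ 2
          + exp (2 * lam * φ t θ) * ((pt σ t θ) ^ 2 + α t θ * (pth σ t θ) ^ 2)
          + α t θ * Q ^ 2 * exp (2 * lam * φ t θ + 2 * (η t θ - U t θ)))
  constraint_θ : ∀ t ∈ S, ∀ θ : ℝ,
    pth η t θ / t =
      2 * pt U t θ * pth U t θ
      + exp (4 * U t θ) / (2 * t ^ 2) * (pt A t θ * pth A t θ)
      - pth α t θ / (2 * t * α t θ)
      + (1 / 2) * (pt φ t θ * pth φ t θ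
          + exp (2 * lam * φ t θ) * (pt σ t θ * pth σ t θ))
  constraint_α : ∀ t ∈ S, ∀ θ : ℝ,
    pt α t θ = - t * (α t θ) ^ 2 * Q ^ 2 * exp (2 * lam * φ t θ + 2 * (η t θ - U t θ))
  evol_U : ∀ t ∈ S, ∀ θ : ℝ,
    pt (pt U) t θ - α t θ * pth (pth U) t θ =
      - pt U t θ / t + pt α t θ * pt U t θ / (2 * α t θ) + pth α t θ * pth U t θ / 2
      + exp (4 * U t θ) / (2 * t ^ 2) * ((pt A t θ) ^ 2 - α t θ * (pth A t θ) ^ 2)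
      + (1 / 4) * α t θ * Q ^ 2 * exp (2 * lam * φ t θ + 2 * (η t θ - U t θ))
  evol_A : ∀ t ∈ S, ∀ θ : ℝ,
    pt (pt A) t θ - α t θ * pth (pth A) t θ =
      pt A t θ / t + pt α t θ * pt A t θ / (2 * α t θ) + pth α t θ * pth A t θ / 2
      - 4 * (pt A t θ * pt U t θ - α t θ * pth A t θ * pth U t θ)
  evol_φ : ∀ t ∈ S, ∀ θ : ℝ,
    pt (pt φ) t θ - α t θ * pth (pth φ) t θ =
      - pt φ t θ / t + pt α t θ * pt φ t θ / (2 * α t θ) + pth α t θ * pth φ t θ / 2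
      + lam * exp (2 * lam * φ t θ) * ((pt σ t θ) ^ 2 - α t θ * (pth σ t θ) ^ 2)
      - lam * α t θ * Q ^ 2 * exp (2 * lam * φ t θ + 2 * (η t θ - U t θ))
  evol_σ : ∀ t ∈ S, ∀ θ : ℝ,
    pt (pt σ) t θ - α t θ * pth (pth σ) t θ =
      - pt σ t θ / t + pt α t θ * pt σ t θ / (2 * α t θ) + pth α t θ * pth σ t θ / 2
      - 2 * lam * (pt φ t θ * pt σ t θ - α t θ * pth φ t θ * pth σ t θ)

/-- A smooth, spatially `2π`-periodic solution of the Gowdy symmetric IIA system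
on the areal time interval `(Tm, Tp)`. -/
structure GowdySolution (Q lam Tm Tp : ℝ) where
  η : ℝ → ℝ → ℝ
  α : ℝ → ℝ → ℝ
  U : ℝ → ℝ → ℝ
  A : ℝ → ℝ → ℝ
  φ : ℝ → ℝ → ℝ
  σ : ℝ → ℝ → ℝ
  smooth : ∀ f ∈ ([η, α, U, A, φ, σ] : List (ℝ → ℝ → ℝ)),
    ContDiffOn ℝ (⊤ : ℕ∞) (fun p : ℝ × ℝ => f p.1 p.2) (Ioo Tm Tp ×ˢ (univ : Set ℝ))
  periodic : ∀ f ∈ ([η, α, U, A, φ, σ] : List (ℝ → ℝ → ℝ)), ∀ t θ : ℝ,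
    f t (θ + 2 * π) = f t θ
  sys : IsGowdyIIA Q lam (Ioo Tm Tp) η α U A φ σ

/-- The energy density `𝓔`. -/
def calE (lam : ℝ) (α U A φ σ : ℝ → ℝ → ℝ) (t θ : ℝ) : ℝ :=
  (pt U t θ) ^ 2 + α t θ * (pth U t θ) ^ 2
  + exp (4 * U t θ) / (4 * t ^ 2) * ((pt A t θ) ^ 2 + α t θ * (pth A t θ) ^ 2)
  + (1 / 4) * ((pt φ t θ) ^ 2 + α t θ * (pth φ t θ) ^ 2
      + exp (2 * lam * φ t θ) * ((pt σ t θ) ^ 2 + α t θ * (pth σ t θ) ^ 2))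

/-- The energy `E(t)` (integral over the circle `S¹ = [0, 2π]`). -/
def energyE (Q lam : ℝ) (η α U A φ σ : ℝ → ℝ → ℝ) (t : ℝ) : ℝ :=
  ∫ θ in Ioc (0 : ℝ) (2 * π),
    (1 / Real.sqrt (α t θ)) *
      (calE lam α U A φ σ t θ
        + (1 / 4) * α t θ * Q ^ 2 * exp (2 * (η t θ + lam * φ t θ - U t θ)))

/-- The energy `Ẽ(t)`. -/
def energyEt (lam : ℝ) (α U A φ σ : ℝ → ℝ → ℝ) (t : ℝ) : ℝ :=
  ∫ θ in Ioc (0 : ℝ) (2 * π), calE lam α U A φ σ t θ / Real.sqrt (α t θ)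

/-- The timelike convergence condition (TCC) for the Gowdy symmetric IIA system. -/
def TCC (Q lam Tm Tp : ℝ) (η α U φ σ : ℝ → ℝ → ℝ) : Prop :=
  ∀ t ∈ Ioo Tm Tp, ∀ θ : ℝ,
    (pt φ t θ) ^ 2 + exp (2 * lam * φ t θ) * (pt σ t θ) ^ 2
      ≥ (1 / 2) * α t θ * Q ^ 2 * exp (2 * (η t θ + lam * φ t θ - U t θ))

/-! ### Smooth periodic functions on the slab -/

/-- `f` is smooth on the slab `(Tm, Tp) × ℝ`. -/
def Sm (Tm Tp : ℝ) (f : ℝ → ℝ → ℝ) : Prop :=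
  ContDiffOn ℝ (⊤ : ℕ∞) (fun p : ℝ × ℝ => f p.1 p.2) (Ioo Tm Tp ×ˢ (univ : Set ℝ))

/-- `f` is `2π`-periodic in the angle. -/
def Per (f : ℝ → ℝ → ℝ) : Prop := ∀ t θ : ℝ, f t (θ + 2 * π) = f t θ

lemma isOpen_slab (Tm Tp : ℝ) : IsOpen (Ioo Tm Tp ×ˢ (univ : Set ℝ)) :=
  isOpen_Ioo.prod isOpen_univ

section Calculus

variable {Tm Tp : ℝ} {f g : ℝ → ℝ → ℝ} {t : ℝ}

lemma Sm.contDiffAt (hf : Sm Tm Tp f) (ht : t ∈ Ioo Tm Tp) (θ : ℝ) :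
    ContDiffAt ℝ (⊤ : ℕ∞) (fun p : ℝ × ℝ => f p.1 p.2) (t, θ) :=
  ContDiffOn.contDiffAt hf ((isOpen_slab Tm Tp).mem_nhds ⟨ht, mem_univ _⟩)

lemma Sm.hasFDerivAt (hf : Sm Tm Tp f) (ht : t ∈ Ioo Tm Tp) (θ : ℝ) :
    HasFDerivAt (fun p : ℝ × ℝ => f p.1 p.2)
      (fderiv ℝ (fun p : ℝ × ℝ => f p.1 p.2) (t, θ)) (t, θ) :=
  ((hf.contDiffAt ht θ).differentiableAt (by simp)).hasFDerivAt

lemma Sm.hasDerivAt_t_fderiv (hf : Sm Tm Tp f) (ht : t ∈ Ioo Tm Tp) (θ : ℝ) :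
    HasDerivAt (fun s => f s θ) (fderiv ℝ (fun p : ℝ × ℝ => f p.1 p.2) (t, θ) (1, 0)) t :=
  (hf.hasFDerivAt ht θ).comp_hasDerivAt (f := fun s : ℝ => (s, θ)) t
    ((hasDerivAt_id t).prodMk (hasDerivAt_const t θ))

lemma Sm.hasDerivAt_θ_fderiv (hf : Sm Tm Tp f) (ht : t ∈ Ioo Tm Tp) (θ : ℝ) :
    HasDerivAt (fun x => f t x) (fderiv ℝ (fun p : ℝ × ℝ => f p.1 p.2) (t, θ) (0, 1)) θ :=
  (hf.hasFDerivAt ht θ).comp_hasDerivAt (f := fun x : ℝ => (t, x)) θ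
    ((hasDerivAt_const θ t).prodMk (hasDerivAt_id θ))

lemma Sm.pt_eq (hf : Sm Tm Tp f) (ht : t ∈ Ioo Tm Tp) (θ : ℝ) :
    pt f t θ = fderiv ℝ (fun p : ℝ × ℝ => f p.1 p.2) (t, θ) (1, 0) :=
  (hf.hasDerivAt_t_fderiv ht θ).deriv

lemma Sm.pth_eq (hf : Sm Tm Tp f) (ht : t ∈ Ioo Tm Tp) (θ : ℝ) :
    pth f t θ = fderiv ℝ (fun p : ℝ × ℝ => f p.1 p.2) (t, θ) (0, 1) :=
  (hf.hasDerivAt_θ_fderiv ht θ).deriv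

lemma Sm.hasDerivAt_t (hf : Sm Tm Tp f) (ht : t ∈ Ioo Tm Tp) (θ : ℝ) :
    HasDerivAt (fun s => f s θ) (pt f t θ) t :=
  (hf.hasDerivAt_t_fderiv ht θ).differentiableAt.hasDerivAt

lemma Sm.hasDerivAt_θ (hf : Sm Tm Tp f) (ht : t ∈ Ioo Tm Tp) (θ : ℝ) :
    HasDerivAt (fun x => f t x) (pth f t θ) θ :=
  (hf.hasDerivAt_θ_fderiv ht θ).differentiableAt.hasDerivAt

lemma Sm.fderiv_contDiffOn (hf : Sm Tm Tp f) :
    ContDiffOn ℝ (⊤ : ℕ∞) (fderiv ℝ (fun p : ℝ × ℝ => f p.1 p.2))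
      (Ioo Tm Tp ×ˢ (univ : Set ℝ)) :=
  ContDiffOn.fderiv_of_isOpen hf (isOpen_slab Tm Tp) (by simp)

lemma Sm.pt (hf : Sm Tm Tp f) : Sm Tm Tp (pt f) :=
  (hf.fderiv_contDiffOn.clm_apply contDiffOn_const).congr
    (fun p hp => hf.pt_eq (t := p.1) hp.1 p.2)

lemma Sm.pth (hf : Sm Tm Tp f) : Sm Tm Tp (pth f) :=
  (hf.fderiv_contDiffOn.clm_apply contDiffOn_const).congr
    (fun p hp => hf.pth_eq (t := p.1) hp.1 p.2)

lemma Sm.comm (hf : Sm Tm Tp f) (ht : t ∈ Ioo Tm Tp) (θ : ℝ) :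
    _root_.pth (_root_.pt f) t θ = _root_.pt (_root_.pth f) t θ := by
  have hsymm : IsSymmSndFDerivAt ℝ (fun p : ℝ × ℝ => f p.1 p.2) (t, θ) :=
    (hf.contDiffAt ht θ).isSymmSndFDerivAt
      (by simpa using (by exact_mod_cast (le_top : (2 : ℕ∞) ≤ ⊤) : ((2 : ℕ∞) : WithTop ℕ∞) ≤ ((⊤ : ℕ∞) : WithTop ℕ∞)))
  have hd : HasFDerivAt (fderiv ℝ (fun p : ℝ × ℝ => f p.1 p.2))
      (fderiv ℝ (fderiv ℝ (fun p : ℝ × ℝ => f p.1 p.2)) (t, θ)) (t, θ) :=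
    ((hf.fderiv_contDiffOn.contDiffAt
      ((isOpen_slab Tm Tp).mem_nhds ⟨ht, mem_univ _⟩)).differentiableAt (by simp)).hasFDerivAt
  have h1 : _root_.pth (_root_.pt f) t θ =
      fderiv ℝ (fderiv ℝ (fun p : ℝ × ℝ => f p.1 p.2)) (t, θ) (0, 1) (1, 0) := by
    have := (hd.comp_hasDerivAt (f := fun x : ℝ => (t, x)) θ
      ((hasDerivAt_const θ t).prodMk (hasDerivAt_id θ))).clm_apply
        (hasDerivAt_const θ ((1, 0) : ℝ × ℝ))
    have h2 : (fun x => _root_.pt f t x) =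
      fun x => fderiv ℝ (fun p : ℝ × ℝ => f p.1 p.2) (t, x) (1, 0) :=
      funext fun x => hf.pt_eq ht x
    unfold _root_.pth
    rw [h2]
    simpa using this.deriv
  have h3 : _root_.pt (_root_.pth f) t θ =
      fderiv ℝ (fderiv ℝ (fun p : ℝ × ℝ => f p.1 p.2)) (t, θ) (1, 0) (0, 1) := by
    have := (hd.comp_hasDerivAt (f := fun s : ℝ => (s, θ)) t
      ((hasDerivAt_id t).prodMk (hasDerivAt_const t θ))).clm_apply
        (hasDerivAt_const t ((0, 1) : ℝ × ℝ))
    have h2 : (fun s => _root_.pth f s θ) =ᶠ[nhds t]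
      fun s => fderiv ℝ (fun p : ℝ × ℝ => f p.1 p.2) (s, θ) (0, 1) := by
      filter_upwards [isOpen_Ioo.mem_nhds ht] with s hs using hf.pth_eq hs θ
    have h4 := h2.deriv_eq
    unfold _root_.pt
    rw [h4]
    simpa using this.deriv
  rw [h1, h3]
  exact hsymm _ _

lemma Sm.add (hf : Sm Tm Tp f) (hg : Sm Tm Tp g) : Sm Tm Tp (fun t θ => f t θ + g t θ) :=
  ContDiffOn.add hf hg

lemma Sm.sub (hf : Sm Tm Tp f) (hg : Sm Tm Tp g) : Sm Tm Tp (fun t θ => f t θ - g t θ) :=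
  ContDiffOn.sub hf hg

lemma Sm.mul (hf : Sm Tm Tp f) (hg : Sm Tm Tp g) : Sm Tm Tp (fun t θ => f t θ * g t θ) :=
  ContDiffOn.mul hf hg

lemma Sm.pow (hf : Sm Tm Tp f) (n : ℕ) : Sm Tm Tp (fun t θ => f t θ ^ n) :=
  ContDiffOn.pow hf n

lemma Sm.exp (hf : Sm Tm Tp f) : Sm Tm Tp (fun t θ => Real.exp (f t θ)) :=
  ContDiffOn.exp hf

lemma Sm.const (c : ℝ) : Sm Tm Tp (fun _ _ => c) := contDiffOn_const

lemma Sm.time : Sm Tm Tp (fun t _ => t) := contDiffOn_fst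

lemma Sm.div (hf : Sm Tm Tp f) (hg : Sm Tm Tp g) (h0 : ∀ t ∈ Ioo Tm Tp, ∀ θ, g t θ ≠ 0) :
    Sm Tm Tp (fun t θ => f t θ / g t θ) :=
  ContDiffOn.div hf hg fun p hp => h0 p.1 hp.1 p.2

lemma Sm.sqrt (hf : Sm Tm Tp f) (h0 : ∀ t ∈ Ioo Tm Tp, ∀ θ, 0 < f t θ) :
    Sm Tm Tp (fun t θ => √(f t θ)) :=
  ContDiffOn.sqrt hf fun p hp => (h0 p.1 hp.1 p.2).ne'

lemma Sm.continuous_θ (hf : Sm Tm Tp f) (ht : t ∈ Ioo Tm Tp) : Continuous (fun x => f t x) :=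
  continuous_iff_continuousAt.2 fun θ => (hf.hasDerivAt_θ ht θ).continuousAt

lemma Sm.continuousOn (hf : Sm Tm Tp f) :
    ContinuousOn (fun p : ℝ × ℝ => f p.1 p.2) (Ioo Tm Tp ×ˢ (univ : Set ℝ)) :=
  ContDiffOn.continuousOn hf

lemma Sm.intervalIntegrable (hf : Sm Tm Tp f) (ht : t ∈ Ioo Tm Tp) (a b : ℝ) :
    IntervalIntegrable (fun x => f t x) volume a b :=
  (hf.continuous_θ ht).intervalIntegrable a b

/-- Differentiation under the integral sign over the circle. -/
lemma Sm.hasDerivAt_integral (hf : Sm Tm Tp f) (ht : t ∈ Ioo Tm Tp) :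
    HasDerivAt (fun s => ∫ x in (0 : ℝ)..(2 * π), f s x)
      (∫ x in (0 : ℝ)..(2 * π), _root_.pt f t x) t := by
  obtain ⟨ε, hε, hball⟩ := Metric.nhds_basis_closedBall.mem_iff.1 (isOpen_Ioo.mem_nhds ht)
  have hK : IsCompact (Metric.closedBall t ε ×ˢ Icc (0 : ℝ) (2 * π)) :=
    (isCompact_closedBall t ε).prod isCompact_Icc
  obtain ⟨C, hC⟩ := hK.exists_bound_of_continuousOn
    (hf.pt.continuousOn.mono (prod_mono hball (subset_univ _)))
  refine (intervalIntegral.hasDerivAt_integral_of_dominated_loc_of_deriv_le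
    (s := Metric.closedBall t ε) (F := fun s x => f s x) (F' := fun s x => _root_.pt f s x)
    (bound := fun _ => C) (Metric.closedBall_mem_nhds t hε) ?_ ?_ ?_ ?_ ?_ ?_).2
  · filter_upwards [isOpen_Ioo.mem_nhds ht] with s hs
    exact (hf.continuous_θ hs).aestronglyMeasurable
  · exact hf.intervalIntegrable ht _ _
  · exact (hf.pt.continuous_θ ht).aestronglyMeasurable
  · refine Eventually.of_forall fun x hx s hs => hC (s, x) ⟨hs, ?_⟩
    rw [uIoc_of_le (by positivity)] at hx
    exact ⟨hx.1.le, hx.2⟩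
  · simp
  · exact Eventually.of_forall fun x _ s hs => hf.hasDerivAt_t (hball hs) x

lemma Per.pt (hf : Per f) : Per (pt f) := fun t θ => by
  simp only [_root_.pt, hf _ θ]

lemma Per.pth (hf : Per f) : Per (pth f) := fun t θ => by
  have h := deriv_comp_add_const (fun x => f t x) (2 * π) θ
  simp only [_root_.pth]
  rw [← h]
  congr 1
  exact funext fun x => hf t x

/-- The integral of a `θ`-derivative over the circle vanishes. -/
lemma Sm.integral_pth (hf : Sm Tm Tp f) (hp : Per f) (ht : t ∈ Ioo Tm Tp) :
    ∫ x in (0 : ℝ)..(2 * π), _root_.pth f t x = 0 := by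
  rw [intervalIntegral.integral_eq_sub_of_hasDerivAt (fun x _ => hf.hasDerivAt_θ ht x)
    (hf.pth.intervalIntegrable ht _ _)]
  have := hp t 0
  rw [zero_add] at this
  rw [this, sub_self]

/-- Every value on a time slice is attained on the fundamental domain `[0, 2π]`. -/
lemma Per.exists_mem_Icc (hf : Per f) (hg : Per g) (t θ : ℝ) :
    ∃ x ∈ Icc (0 : ℝ) (2 * π), f t x = f t θ ∧ g t x = g t θ := by
  obtain ⟨n, hn, -⟩ := existsUnique_add_zsmul_mem_Ico Real.two_pi_pos θ 0
  rw [zero_add] at hn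
  have h1 : Function.Periodic (fun x => f t x) (2 * π) := hf t
  have h2 : Function.Periodic (fun x => g t x) (2 * π) := hg t
  exact ⟨_, Ico_subset_Icc_self hn, h1.zsmul n θ, h2.zsmul n θ⟩

end Calculus

/-! ### A maximum principle and bounds from time slices -/

section MaximumPrinciple

variable {Tm Tp : ℝ} {F F₁ F₂ : ℝ → ℝ → ℝ} {t t₁ : ℝ}

/-- If `F` has, over all of `[τ, t₁]` in time, its largest value at `(τ, x)` with `τ < t₁`, then
its derivative at `(τ, x)` along any direction `∂ₜ + k ∂_θ` is nonpositive. -/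
lemma transport_nonpos_of_max {τ x a b : ℝ} (k : ℝ) (hτ : τ < t₁)
    (hmax : ∀ s ∈ Icc τ t₁, ∀ y, F s y ≤ F τ x)
    (ha : HasDerivAt (fun s => F s x) a τ) (hb : HasDerivAt (fun y => F τ y) b x) :
    a + k * b ≤ 0 := by
  have hb0 : b = 0 := IsLocalMax.hasDerivAt_eq_zero
    (Eventually.of_forall fun y => hmax τ ⟨le_rfl, hτ.le⟩ y) hb
  have hlim : Tendsto (slope (fun s => F s x) τ) (nhdsWithin τ (Ioi τ)) (nhds a) :=
    (hasDerivAt_iff_tendsto_slope.1 ha).mono_left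
      (nhdsWithin_mono τ fun s (hs : τ < s) => hs.ne')
  have ha0 : a ≤ 0 := by
    refine le_of_tendsto hlim ?_
    filter_upwards [Ioo_mem_nhdsGT hτ] with s hs
    rw [slope_def_field]
    exact div_nonpos_of_nonpos_of_nonneg (sub_nonpos.2 (hmax s ⟨hs.1.le, hs.2.le⟩ x))
      (sub_nonneg.2 hs.1.le)
  rw [hb0, mul_zero, add_zero]
  exact ha0

/-- A maximum principle, towards the past, for a pair of periodic functions: if the larger of the
two is strictly increasing along some direction pointing to the future, then both are bounded by
any bound at the final time. -/
lemma max_principle (ht₁ : t₁ ∈ Ioo Tm Tp)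
    (c₁ : ContinuousOn (fun p : ℝ × ℝ => F₁ p.1 p.2) (Ioo Tm Tp ×ˢ (univ : Set ℝ)))
    (c₂ : ContinuousOn (fun p : ℝ × ℝ => F₂ p.1 p.2) (Ioo Tm Tp ×ˢ (univ : Set ℝ)))
    (p₁ : Per F₁) (p₂ : Per F₂)
    (h₁ : ∀ t ∈ Ioo Tm t₁, ∀ θ, F₂ t θ ≤ F₁ t θ → ∃ a b k, HasDerivAt (fun s => F₁ s θ) a t ∧
      HasDerivAt (fun x => F₁ t x) b θ ∧ 0 < a + k * b)
    (h₂ : ∀ t ∈ Ioo Tm t₁, ∀ θ, F₁ t θ ≤ F₂ t θ → ∃ a b k, HasDerivAt (fun s => F₂ s θ) a t ∧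
      HasDerivAt (fun x => F₂ t x) b θ ∧ 0 < a + k * b)
    {M : ℝ} (m₁ : ∀ θ, F₁ t₁ θ ≤ M) (m₂ : ∀ θ, F₂ t₁ θ ≤ M) :
    ∀ t ∈ Ioc Tm t₁, ∀ θ, F₁ t θ ≤ M ∧ F₂ t θ ≤ M := by
  intro t ht θ
  have hsub : Icc t t₁ ×ˢ Icc (0 : ℝ) (2 * π) ⊆ Ioo Tm Tp ×ˢ (univ : Set ℝ) := fun p hp =>
    ⟨⟨ht.1.trans_le hp.1.1, hp.1.2.trans_lt ht₁.2⟩, mem_univ _⟩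
  obtain ⟨⟨τ, x⟩, ⟨hτ, -⟩, hm⟩ := (isCompact_Icc.prod isCompact_Icc).exists_isMaxOn
    (s := Icc t t₁ ×ˢ Icc (0 : ℝ) (2 * π))
    (f := fun p : ℝ × ℝ => max (F₁ p.1 p.2) (F₂ p.1 p.2))
    ⟨(t, 0), ⟨le_rfl, ht.2⟩, le_rfl, Real.two_pi_pos.le⟩ ((ContinuousOn.sup c₁ c₂).mono hsub)
  have hmax : ∀ s ∈ Icc t t₁, ∀ y, max (F₁ s y) (F₂ s y) ≤ max (F₁ τ x) (F₂ τ x) := by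
    intro s hs y
    obtain ⟨z, hz, e₁, e₂⟩ := p₁.exists_mem_Icc p₂ s y
    rw [← e₁, ← e₂]
    exact hm (a := (s, z)) ⟨hs, hz⟩
  suffices hM : max (F₁ τ x) (F₂ τ x) ≤ M from
    max_le_iff.1 ((hmax t ⟨le_rfl, ht.2⟩ θ).trans hM)
  rcases hτ.2.eq_or_lt with e | hlt
  · simp only at e
    rw [e]
    exact max_le (m₁ x) (m₂ x)
  exfalso
  have hτ' : τ ∈ Ioo Tm t₁ := ⟨ht.1.trans_le hτ.1, hlt⟩
  rcases le_total (F₂ τ x) (F₁ τ x) with hle | hle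
  · obtain ⟨a, b, k, ha, hb, hk⟩ := h₁ τ hτ' x hle
    refine hk.not_ge (transport_nonpos_of_max k hlt (fun s hs y => ?_) ha hb)
    have := hmax s ⟨hτ.1.trans hs.1, hs.2⟩ y
    rw [max_eq_left hle] at this
    exact (le_max_left _ _).trans this
  · obtain ⟨a, b, k, ha, hb, hk⟩ := h₂ τ hτ' x hle
    refine hk.not_ge (transport_nonpos_of_max k hlt (fun s hs y => ?_) ha hb)
    have := hmax s ⟨hτ.1.trans hs.1, hs.2⟩ y
    rw [max_eq_right hle] at this
    exact (le_max_right _ _).trans this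

end MaximumPrinciple

section Slices

variable {Tm Tp : ℝ} {f : ℝ → ℝ → ℝ} {t₁ : ℝ}

/-- Smooth periodic functions are bounded on each time slice. -/
lemma Sm.exists_slice_bound (hf : Sm Tm Tp f) (hp : Per f) (ht₁ : t₁ ∈ Ioo Tm Tp) :
    ∃ C, ∀ θ, |f t₁ θ| ≤ C := by
  obtain ⟨C, hC⟩ := (isCompact_Icc (a := (0 : ℝ)) (b := 2 * π)).exists_bound_of_continuousOn
    (hf.continuous_θ ht₁).continuousOn
  refine ⟨C, fun θ => ?_⟩
  obtain ⟨x, hx, e, -⟩ := hp.exists_mem_Icc hp t₁ θ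
  rw [← e]
  exact hC x hx

/-- A bound on the time derivative up to the past boundary bounds the function. -/
lemma Sm.exists_bound_of_pt (hf : Sm Tm Tp f) (hp : Per f) (ht₁ : t₁ ∈ Ioo Tm Tp)
    (h : ∃ C, ∀ t ∈ Ioc Tm t₁, ∀ θ, |_root_.pt f t θ| ≤ C) :
    ∃ C, ∀ t ∈ Ioc Tm t₁, ∀ θ, |f t θ| ≤ C := by
  obtain ⟨C₀, h₀⟩ := hf.exists_slice_bound hp ht₁
  obtain ⟨C, hC⟩ := h
  refine ⟨C₀ + C * (t₁ - Tm), fun t ht θ => ?_⟩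
  have hC0 : 0 ≤ C := (abs_nonneg _).trans (hC t ht θ)
  have hmv := (convex_Ioc Tm t₁).norm_image_sub_le_of_norm_hasDerivWithin_le
    (f := fun s => f s θ) (f' := fun s => _root_.pt f s θ) (C := C)
    (fun s hs => (hf.hasDerivAt_t ⟨hs.1, hs.2.trans_lt ht₁.2⟩ θ).hasDerivWithinAt)
    (fun s hs => hC s hs θ) (⟨ht₁.1, le_rfl⟩ : t₁ ∈ Ioc Tm t₁) ht
  have h1 : |t - t₁| ≤ t₁ - Tm := abs_le.2 ⟨by linarith [ht.1], by linarith [ht.2, ht.1]⟩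
  have h2 : |f t θ - f t₁ θ| ≤ C * (t₁ - Tm) :=
    hmv.trans (mul_le_mul_of_nonneg_left h1 hC0)
  have h3 := abs_add_le (f t θ - f t₁ θ) (f t₁ θ)
  rw [sub_add_cancel] at h3
  linarith [h₀ θ]

end Slices

/-! ### Null energy densities and their transport equations -/

section Transport

/-- The null derivative `∂ₜf + s √α ∂_θ f`, for `s = ±1`. -/
def Nd (α : ℝ → ℝ → ℝ) (s : ℝ) (f : ℝ → ℝ → ℝ) (t θ : ℝ) : ℝ :=
  pt f t θ + s * √(α t θ) * pth f t θ

variable {Q lam Tm Tp : ℝ}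

namespace GowdySolution

variable (G : GowdySolution Q lam Tm Tp)

/-- The potential term `V = α Q² e^{2λφ + 2(η − U)}`. -/
def V (t θ : ℝ) : ℝ :=
  G.α t θ * Q ^ 2 * exp (2 * lam * G.φ t θ + 2 * (G.η t θ - G.U t θ))

/-- The null energy density: the wave-map norm squared of the null derivative
`∂ₜ + s √α ∂_θ` of `(U, A, φ, σ)`. -/
def Es (s : ℝ) (t θ : ℝ) : ℝ :=
  Nd G.α s G.U t θ ^ 2 + exp (4 * G.U t θ) / (4 * t ^ 2) * Nd G.α s G.A t θ ^ 2
    + (1 / 4) * (Nd G.α s G.φ t θ ^ 2 + exp (2 * lam * G.φ t θ) * Nd G.α s G.σ t θ ^ 2)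

/-- The energy density `𝓔`, written as the mean of the two null energy densities. -/
def En (t θ : ℝ) : ℝ := (G.Es 1 t θ + G.Es (-1) t θ) / 2

lemma sm_η : Sm Tm Tp G.η := G.smooth _ (by simp)
lemma sm_α : Sm Tm Tp G.α := G.smooth _ (by simp)
lemma sm_U : Sm Tm Tp G.U := G.smooth _ (by simp)
lemma sm_A : Sm Tm Tp G.A := G.smooth _ (by simp)
lemma sm_φ : Sm Tm Tp G.φ := G.smooth _ (by simp)
lemma sm_σ : Sm Tm Tp G.σ := G.smooth _ (by simp)
lemma per_η : Per G.η := G.periodic _ (by simp)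
lemma per_α : Per G.α := G.periodic _ (by simp)
lemma per_U : Per G.U := G.periodic _ (by simp)
lemma per_A : Per G.A := G.periodic _ (by simp)
lemma per_φ : Per G.φ := G.periodic _ (by simp)
lemma per_σ : Per G.σ := G.periodic _ (by simp)

lemma sm_sqrt : Sm Tm Tp (fun t θ => √(G.α t θ)) := G.sm_α.sqrt G.sys.alpha_pos

lemma sm_Nd {f : ℝ → ℝ → ℝ} (hf : Sm Tm Tp f) (s : ℝ) : Sm Tm Tp (Nd G.α s f) :=
  hf.pt.add (((Sm.const s).mul G.sm_sqrt).mul hf.pth)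

lemma per_Nd {f : ℝ → ℝ → ℝ} (hf : Per f) (s : ℝ) : Per (Nd G.α s f) := fun t θ => by
  simp only [Nd, hf.pt t θ, hf.pth t θ, G.per_α t θ]

lemma sm_V : Sm Tm Tp G.V :=
  (G.sm_α.mul (Sm.const _)).mul
    ((((Sm.const _).mul G.sm_φ).add ((Sm.const 2).mul (G.sm_η.sub G.sm_U))).exp)

lemma per_V : Per G.V := fun t θ => by
  simp only [V, G.per_α t θ, G.per_φ t θ, G.per_η t θ, G.per_U t θ]

lemma sm_Es (hTm : 0 < Tm) (s : ℝ) : Sm Tm Tp (G.Es s) := by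
  have h4 : Sm Tm Tp (fun t θ => exp (4 * G.U t θ) / (4 * t ^ 2)) :=
    (((Sm.const 4).mul G.sm_U).exp).div ((Sm.const 4).mul (Sm.time.pow 2)) fun t ht θ => by
      have : 0 < t := hTm.trans ht.1
      positivity
  exact (((G.sm_Nd G.sm_U s).pow 2).add (h4.mul ((G.sm_Nd G.sm_A s).pow 2))).add
    ((Sm.const (1 / 4)).mul (((G.sm_Nd G.sm_φ s).pow 2).add
      ((((Sm.const _).mul G.sm_φ).exp).mul ((G.sm_Nd G.sm_σ s).pow 2))))

lemma per_Es (s : ℝ) : Per (G.Es s) := fun t θ => by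
  simp only [Es, G.per_Nd G.per_U s t θ, G.per_Nd G.per_A s t θ, G.per_Nd G.per_φ s t θ,
    G.per_Nd G.per_σ s t θ, G.per_φ t θ, G.per_U t θ]

lemma Es_nonneg (s t θ : ℝ) : 0 ≤ G.Es s t θ := by
  unfold Es; positivity

lemma En_nonneg (t θ : ℝ) : 0 ≤ G.En t θ := by
  have := G.Es_nonneg 1 t θ
  have := G.Es_nonneg (-1) t θ
  unfold En; positivity

lemma sm_En (hTm : 0 < Tm) : Sm Tm Tp G.En :=
  ((G.sm_Es hTm 1).add (G.sm_Es hTm (-1))).div (Sm.const 2) (fun _ _ _ => two_ne_zero)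

lemma V_pos (hQ : Q ≠ 0) {t : ℝ} (ht : t ∈ Ioo Tm Tp) (θ : ℝ) : 0 < G.V t θ := by
  have := G.sys.alpha_pos t ht θ
  unfold V; positivity

lemma sqrt_pos {t : ℝ} (ht : t ∈ Ioo Tm Tp) (θ : ℝ) : 0 < √(G.α t θ) :=
  Real.sqrt_pos.2 (G.sys.alpha_pos t ht θ)

lemma En_eq {t : ℝ} (ht : t ∈ Ioo Tm Tp) (θ : ℝ) :
    G.En t θ = (pt G.U t θ) ^ 2 + G.α t θ * (pth G.U t θ) ^ 2
      + exp (4 * G.U t θ) / (4 * t ^ 2) *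
          ((pt G.A t θ) ^ 2 + G.α t θ * (pth G.A t θ) ^ 2)
      + (1 / 4) * ((pt G.φ t θ) ^ 2 + G.α t θ * (pth G.φ t θ) ^ 2
          + exp (2 * lam * G.φ t θ) *
            ((pt G.σ t θ) ^ 2 + G.α t θ * (pth G.σ t θ) ^ 2)) := by
  have h := Real.sq_sqrt (G.sys.alpha_pos t ht θ).le
  simp only [En, Es, Nd]
  rw [← h]
  simp only [Real.sqrt_sq (Real.sqrt_nonneg _)]
  ring

lemma pt_sqrt {t : ℝ} (ht : t ∈ Ioo Tm Tp) (θ : ℝ) :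
    HasDerivAt (fun s => √(G.α s θ)) (-(t * G.V t θ / 2) * √(G.α t θ)) t := by
  have h := (G.sm_α.hasDerivAt_t ht θ).sqrt (G.sys.alpha_pos t ht θ).ne'
  convert h using 1
  have h2 := G.sqrt_pos ht θ
  have h3 := Real.sq_sqrt (G.sys.alpha_pos t ht θ).le
  rw [G.sys.constraint_α t ht θ, V]
  generalize √(G.α t θ) = r at *
  rw [← h3]
  field_simp

lemma pth_sqrt {t : ℝ} (ht : t ∈ Ioo Tm Tp) (θ : ℝ) :
    HasDerivAt (fun x => √(G.α t x)) (pth G.α t θ / (2 * √(G.α t θ))) θ :=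
  (G.sm_α.hasDerivAt_θ ht θ).sqrt (G.sys.alpha_pos t ht θ).ne'

/-- Applying `∂ₜ − s √α ∂_θ` to the null derivative `∂ₜf + s √α ∂_θ f` yields the wave
operator and first-order terms. -/
lemma Nd_transport {f : ℝ → ℝ → ℝ} (hf : Sm Tm Tp f) {s : ℝ} (hs : s ^ 2 = 1) {t : ℝ}
    (ht : t ∈ Ioo Tm Tp) (θ : ℝ) :
    pt (Nd G.α s f) t θ - s * √(G.α t θ) * pth (Nd G.α s f) t θ =
      (pt (pt f) t θ - G.α t θ * pth (pth f) t θ) - pth G.α t θ * pth f t θ / 2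
        - s * (t * G.V t θ / 2) * √(G.α t θ) * pth f t θ := by
  have h1 := (hf.pt.hasDerivAt_t ht θ).add
    (((G.pt_sqrt ht θ).const_mul s).mul (hf.pth.hasDerivAt_t ht θ))
  have h2 := (hf.pt.hasDerivAt_θ ht θ).add
    (((G.pth_sqrt ht θ).const_mul s).mul (hf.pth.hasDerivAt_θ ht θ))
  have e1 : pt (Nd G.α s f) t θ = _ := h1.deriv
  have e2 : pth (Nd G.α s f) t θ = _ := h2.deriv
  rw [e1, e2, hf.comm ht θ]
  have h3 := G.sqrt_pos ht θ
  have h4 := Real.sq_sqrt (G.sys.alpha_pos t ht θ).le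
  rw [← h4]
  simp only [Real.sqrt_sq (Real.sqrt_nonneg _)]
  generalize √(G.α t θ) = r at *
  field_simp
  linear_combination (-pth G.α t θ * pth f t θ - 2 * r ^ 2 * pth (pth f) t θ) * hs

/-- Transport equation for the null energy density along the opposite null direction. The
quadratic wave-map couplings cancel, and so do all derivatives of `α` apart from the
damping term `-t V Eₛ`. -/
lemma Es_transport (hTm : 0 < Tm) {s : ℝ} (hs : s ^ 2 = 1) {t : ℝ}
    (ht : t ∈ Ioo Tm Tp) (θ : ℝ) :
    pt (G.Es s) t θ - s * √(G.α t θ) * pth (G.Es s) t θ =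
      - (t * G.V t θ) * G.Es s t θ
      + G.V t θ / 2 * (Nd G.α s G.U t θ - lam * Nd G.α s G.φ t θ)
      - (1 / t) * (Nd G.α s G.U t θ * (Nd G.α s G.U t θ + Nd G.α (-s) G.U t θ)
        + exp (4 * G.U t θ) / (4 * t ^ 2) *
            (Nd G.α s G.A t θ * (Nd G.α s G.A t θ - Nd G.α (-s) G.A t θ))
        + (1 / 4) * (Nd G.α s G.φ t θ * (Nd G.α s G.φ t θ + Nd G.α (-s) G.φ t θ)
          + exp (2 * lam * G.φ t θ) *
            (Nd G.α s G.σ t θ * (Nd G.α s G.σ t θ + Nd G.α (-s) G.σ t θ)))) := by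
  have ht0 : t ≠ 0 := (hTm.trans ht.1).ne'
  have hα := G.sys.alpha_pos t ht θ
  have hU := G.Nd_transport G.sm_U hs ht θ
  have hA := G.Nd_transport G.sm_A hs ht θ
  have hφ := G.Nd_transport G.sm_φ hs ht θ
  have hσ := G.Nd_transport G.sm_σ hs ht θ
  have hαt : pt G.α t θ / G.α t θ = - t * G.V t θ := by
    rw [G.sys.constraint_α t ht θ, V]; field_simp
  have q : ∀ x : ℝ, pt G.α t θ * x / (2 * G.α t θ) = - (t * G.V t θ / 2) * x := fun x => by
    have : pt G.α t θ * x / (2 * G.α t θ) = (pt G.α t θ / G.α t θ) * x / 2 := by field_simp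
    rw [this, hαt]; ring
  have hV : ∀ c : ℝ, c * G.α t θ * Q ^ 2 *
      exp (2 * lam * G.φ t θ + 2 * (G.η t θ - G.U t θ)) = c * G.V t θ := fun c => by
    rw [V]; ring
  rw [G.sys.evol_U t ht θ, q, hV] at hU
  rw [G.sys.evol_A t ht θ, q] at hA
  rw [G.sys.evol_φ t ht θ, q, hV] at hφ
  rw [G.sys.evol_σ t ht θ, q] at hσ
  have e4t : HasDerivAt (fun τ => exp (4 * G.U τ θ) / (4 * τ ^ 2))
      (exp (4 * G.U t θ) / (4 * t ^ 2) * (4 * pt G.U t θ - 2 / t)) t := by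
    have := ((G.sm_U.hasDerivAt_t ht θ).const_mul 4).exp.div
      (((hasDerivAt_id t).pow 2).const_mul 4) (by simpa using ht0)
    refine this.congr_deriv ?_
    simp only [Pi.pow_apply, id, Nat.cast_ofNat, Nat.add_one_sub_one, pow_one, mul_one]
    field_simp
  have e4x : HasDerivAt (fun x => exp (4 * G.U t x) / (4 * t ^ 2))
      (exp (4 * G.U t θ) / (4 * t ^ 2) * (4 * pth G.U t θ)) θ := by
    have := ((G.sm_U.hasDerivAt_θ ht θ).const_mul 4).exp.div_const (4 * t ^ 2)
    exact this.congr_deriv (by ring)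
  have h1 := (((G.sm_Nd G.sm_U s).hasDerivAt_t ht θ).pow 2).add
    (e4t.mul (((G.sm_Nd G.sm_A s).hasDerivAt_t ht θ).pow 2)) |>.add
    (((((G.sm_Nd G.sm_φ s).hasDerivAt_t ht θ).pow 2).add
      (((G.sm_φ.hasDerivAt_t ht θ).const_mul (2 * lam)).exp.mul
        (((G.sm_Nd G.sm_σ s).hasDerivAt_t ht θ).pow 2))).const_mul (1 / 4))
  have h2 := (((G.sm_Nd G.sm_U s).hasDerivAt_θ ht θ).pow 2).add
    (e4x.mul (((G.sm_Nd G.sm_A s).hasDerivAt_θ ht θ).pow 2)) |>.add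
    (((((G.sm_Nd G.sm_φ s).hasDerivAt_θ ht θ).pow 2).add
      (((G.sm_φ.hasDerivAt_θ ht θ).const_mul (2 * lam)).exp.mul
        (((G.sm_Nd G.sm_σ s).hasDerivAt_θ ht θ).pow 2))).const_mul (1 / 4))
  have d1 : pt (G.Es s) t θ = _ := h1.deriv
  have d2 : pth (G.Es s) t θ = _ := h2.deriv
  rw [d1, d2]
  have hr := Real.sq_sqrt hα.le
  have hs' : s = 1 ∨ s = -1 := sq_eq_one_iff.1 hs
  clear d1 d2 h1 h2 e4t e4x q hV hαt hα
  simp only [Es]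
  simp only [Nat.cast_ofNat, Nat.add_one_sub_one, pow_one, Pi.pow_apply]
  generalize pt (Nd G.α s G.U) t θ = NUt at *
  generalize pth (Nd G.α s G.U) t θ = NUx at *
  generalize pt (Nd G.α s G.A) t θ = NAt at *
  generalize pth (Nd G.α s G.A) t θ = NAx at *
  generalize pt (Nd G.α s G.φ) t θ = Nφt at *
  generalize pth (Nd G.α s G.φ) t θ = Nφx at *
  generalize pt (Nd G.α s G.σ) t θ = Nσt at *
  generalize pth (Nd G.α s G.σ) t θ = Nσx at *
  simp only [Nd]
  rw [← hr] at hU hA hφ hσ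
  simp only [Real.sqrt_sq (Real.sqrt_nonneg _)] at hU hA hφ hσ
  generalize √(G.α t θ) = r at *
  rcases hs' with rfl | rfl
  · linear_combination (2 * (pt G.U t θ + r * pth G.U t θ)) * hU
      + exp (4 * G.U t θ) / (4 * t ^ 2) * (2 * (pt G.A t θ + r * pth G.A t θ)) * hA
      + (1 / 4) * (2 * (pt G.φ t θ + r * pth G.φ t θ)) * hφ
      + (1 / 4) * exp (2 * lam * G.φ t θ) * (2 * (pt G.σ t θ + r * pth G.σ t θ)) * hσ
  · linear_combination (2 * (pt G.U t θ - r * pth G.U t θ)) * hU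
      + exp (4 * G.U t θ) / (4 * t ^ 2) * (2 * (pt G.A t θ - r * pth G.A t θ)) * hA
      + (1 / 4) * (2 * (pt G.φ t θ - r * pth G.φ t θ)) * hφ
      + (1 / 4) * exp (2 * lam * G.φ t θ) * (2 * (pt G.σ t θ - r * pth G.σ t θ)) * hσ

/-! ### The total energy -/

lemma hasDerivAt_V (hTm : 0 < Tm) {t : ℝ} (ht : t ∈ Ioo Tm Tp) (θ : ℝ) :
    HasDerivAt (fun s => G.V s θ)
      (G.V t θ * (2 * t * G.En t θ - t * G.V t θ / 2
        + 2 * lam * pt G.φ t θ - 2 * pt G.U t θ)) t := by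
  have ht0 : t ≠ 0 := (hTm.trans ht.1).ne'
  have h := ((G.sm_α.hasDerivAt_t ht θ).mul_const (Q ^ 2)).mul
    (((G.sm_φ.hasDerivAt_t ht θ).const_mul (2 * lam)).add
      (((G.sm_η.hasDerivAt_t ht θ).sub (G.sm_U.hasDerivAt_t ht θ)).const_mul 2)).exp
  refine h.congr_deriv ?_
  have hη : pt G.η t θ = t * (G.En t θ + G.V t θ / 4) := by
    have h1 := G.sys.constraint_t t ht θ
    rw [div_eq_iff ht0] at h1
    rw [h1, G.En_eq ht θ, V]
    ring
  have hα := G.sys.constraint_α t ht θ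
  rw [hη, hα]
  have hV : G.V t θ =
    G.α t θ * Q ^ 2 * exp (2 * lam * G.φ t θ + 2 * (G.η t θ - G.U t θ)) := rfl
  simp only [Pi.add_apply, Pi.sub_apply]
  generalize exp (2 * lam * G.φ t θ + 2 * (G.η t θ - G.U t θ)) = e at *
  rw [hV]
  ring

/-- The part of the energy density responsible for the change of the total energy. -/
def Kin (t θ : ℝ) : ℝ :=
  (pt G.U t θ) ^ 2 + exp (4 * G.U t θ) / (4 * t ^ 2) * (G.α t θ * (pth G.A t θ) ^ 2)
    + (1 / 4) * ((pt G.φ t θ) ^ 2 + exp (2 * lam * G.φ t θ) * (pt G.σ t θ) ^ 2)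

lemma Kin_nonneg {t : ℝ} (ht : t ∈ Ioo Tm Tp) (θ : ℝ) : 0 ≤ G.Kin t θ := by
  have := G.sys.alpha_pos t ht θ
  unfold Kin; positivity

lemma Kin_le_En {t : ℝ} (ht : t ∈ Ioo Tm Tp) (θ : ℝ) : G.Kin t θ ≤ G.En t θ := by
  have := G.sys.alpha_pos t ht θ
  have h : 0 ≤ G.α t θ * (pth G.U t θ) ^ 2
      + exp (4 * G.U t θ) / (4 * t ^ 2) * (pt G.A t θ) ^ 2
      + (1 / 4) * (G.α t θ * (pth G.φ t θ) ^ 2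
        + exp (2 * lam * G.φ t θ) * (G.α t θ * (pth G.σ t θ) ^ 2)) := by positivity
  rw [G.En_eq ht θ, Kin]
  linarith

/-- Density of the total energy. -/
def Den (t θ : ℝ) : ℝ := (G.En t θ + G.V t θ / 4) / √(G.α t θ)

lemma sm_Den (hTm : 0 < Tm) : Sm Tm Tp G.Den :=
  ((G.sm_En hTm).add (G.sm_V.div (Sm.const 4) fun _ _ _ => four_ne_zero)).div G.sm_sqrt
    fun _ ht θ => (G.sqrt_pos ht θ).ne'

/-- The energy density obeys a conservation law up to the term `-2 Kin / (t √α)`: all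
terms containing `V` cancel. -/
lemma pt_Den (hTm : 0 < Tm) {t : ℝ} (ht : t ∈ Ioo Tm Tp) (θ : ℝ) :
    pt G.Den t θ = (pth (G.Es 1) t θ - pth (G.Es (-1)) t θ) / 2
      - 2 / t * (G.Kin t θ / √(G.α t θ)) := by
  have ht0 : t ≠ 0 := (hTm.trans ht.1).ne'
  have h := ((((G.sm_Es hTm 1).hasDerivAt_t ht θ).add
    ((G.sm_Es hTm (-1)).hasDerivAt_t ht θ)).div_const 2 |>.add
      ((G.hasDerivAt_V hTm ht θ).div_const 4)).div (G.pt_sqrt ht θ) (G.sqrt_pos ht θ).ne'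
  have e : pt G.Den t θ = _ := h.deriv
  rw [e]
  have t1 := G.Es_transport hTm (s := 1) (by norm_num) ht θ
  have t2 := G.Es_transport hTm (s := -1) (by norm_num) ht θ
  rw [neg_neg] at t2
  rw [sub_eq_iff_eq_add] at t1 t2
  rw [t1, t2]
  have h3 := G.sqrt_pos ht θ
  have h4 := Real.sq_sqrt (G.sys.alpha_pos t ht θ).le
  have hE : G.En t θ = (G.Es 1 t θ + G.Es (-1) t θ) / 2 := rfl
  simp only [Pi.add_apply]
  rw [hE]
  generalize pth (G.Es 1) t θ = p1
  generalize pth (G.Es (-1)) t θ = p2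
  generalize G.Es 1 t θ = E1
  generalize G.Es (-1) t θ = E2
  simp only [Kin, Nd]
  rw [← h4]
  simp only [Real.sqrt_sq (Real.sqrt_nonneg _)]
  generalize √(G.α t θ) = r at *
  have h5 := h3.ne'
  field_simp
  ring

/-- The total energy. -/
def Etot (t : ℝ) : ℝ := ∫ x in (0 : ℝ)..(2 * π), G.Den t x

lemma Den_pos (hQ : Q ≠ 0) {t : ℝ} (ht : t ∈ Ioo Tm Tp) (θ : ℝ) : 0 < G.Den t θ := by
  have := G.V_pos hQ ht θ
  have := G.En_nonneg t θ
  have := G.sqrt_pos ht θ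
  unfold Den; positivity

lemma Etot_pos (hTm : 0 < Tm) (hQ : Q ≠ 0) {t : ℝ} (ht : t ∈ Ioo Tm Tp) : 0 < G.Etot t :=
  intervalIntegral.intervalIntegral_pos_of_pos
    ((G.sm_Den hTm).intervalIntegrable ht _ _) (fun x => G.Den_pos hQ ht x) Real.two_pi_pos

/-- Towards the past the total energy increases, at a rate of at most `(2/t)` times itself. -/
lemma hasDerivAt_Etot (hTm : 0 < Tm) (hQ : Q ≠ 0) {t : ℝ} (ht : t ∈ Ioo Tm Tp) :
    ∃ K, HasDerivAt G.Etot (-K) t ∧ 0 ≤ K ∧ K ≤ 2 / t * G.Etot t := by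
  have ht0 : 0 < t := hTm.trans ht.1
  have hd := (G.sm_Den hTm).hasDerivAt_integral ht
  have i1 := (G.sm_Es hTm 1).pth.intervalIntegrable ht 0 (2 * π)
  have i2 := (G.sm_Es hTm (-1)).pth.intervalIntegrable ht 0 (2 * π)
  have i3 := (G.sm_Den hTm).pt.intervalIntegrable ht 0 (2 * π)
  have hk : (fun x => 2 / t * (G.Kin t x / √(G.α t x))) =
      fun x => (pth (G.Es 1) t x - pth (G.Es (-1)) t x) / 2 - pt G.Den t x :=
    funext fun x => by rw [G.pt_Den hTm ht x]; ring
  have i4 : IntervalIntegrable (fun x => 2 / t * (G.Kin t x / √(G.α t x))) volume 0 (2 * π) := by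
    rw [hk]
    exact ((i1.sub i2).div_const 2).sub i3
  refine ⟨∫ x in (0 : ℝ)..(2 * π), 2 / t * (G.Kin t x / √(G.α t x)), ?_, ?_, ?_⟩
  · refine hd.congr_deriv ?_
    rw [hk, intervalIntegral.integral_sub ((i1.sub i2).div_const 2) i3,
      intervalIntegral.integral_div, intervalIntegral.integral_sub i1 i2,
      (G.sm_Es hTm 1).integral_pth (G.per_Es 1) ht,
      (G.sm_Es hTm (-1)).integral_pth (G.per_Es (-1)) ht]
    ring
  · refine intervalIntegral.integral_nonneg Real.two_pi_pos.le fun x _ => ?_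
    have := G.Kin_nonneg ht x
    positivity
  · rw [Etot, ← intervalIntegral.integral_const_mul]
    refine intervalIntegral.integral_mono_on Real.two_pi_pos.le i4
      (((G.sm_Den hTm).intervalIntegrable ht 0 (2 * π)).const_mul _) fun x _ => ?_
    have h1 := G.Kin_le_En ht x
    have h2 := (G.V_pos hQ ht x).le
    have h3 := G.sqrt_pos ht x
    refine mul_le_mul_of_nonneg_left ?_ (by positivity)
    rw [Den]
    gcongr
    linarith

/-- The total energy is bounded below towards the past. -/
lemma Etot_ge (hTm : 0 < Tm) (hQ : Q ≠ 0) {t t₁ : ℝ} (ht : t ∈ Ioo Tm Tp) (ht₁ : t₁ ∈ Ioo Tm Tp)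
    (h : t ≤ t₁) : G.Etot t₁ ≤ G.Etot t := by
  refine antitoneOn_of_deriv_nonpos (convex_Ioo Tm Tp) (fun s hs => ?_) (fun s hs => ?_)
    (fun s hs => ?_) ht ht₁ h
  · obtain ⟨K, h1, -⟩ := G.hasDerivAt_Etot hTm hQ hs
    exact h1.continuousAt.continuousWithinAt
  · rw [interior_Ioo] at hs
    obtain ⟨K, h1, -⟩ := G.hasDerivAt_Etot hTm hQ hs
    exact h1.differentiableAt.differentiableWithinAt
  · rw [interior_Ioo] at hs
    obtain ⟨K, h1, h2, -⟩ := G.hasDerivAt_Etot hTm hQ hs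
    rw [h1.deriv]; linarith

/-- The total energy is bounded above towards the past, because `t² E(t)` is nondecreasing. -/
lemma Etot_le (hTm : 0 < Tm) (hQ : Q ≠ 0) {t t₁ : ℝ} (ht : t ∈ Ioo Tm Tp) (ht₁ : t₁ ∈ Ioo Tm Tp)
    (h : t ≤ t₁) : t ^ 2 * G.Etot t ≤ t₁ ^ 2 * G.Etot t₁ := by
  have key : ∀ s ∈ Ioo Tm Tp, ∃ D, HasDerivAt (fun s => s ^ 2 * G.Etot s) D s ∧ 0 ≤ D := by
    intro s hs
    obtain ⟨K, h1, h2, h3⟩ := G.hasDerivAt_Etot hTm hQ hs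
    have hs0 : 0 < s := hTm.trans hs.1
    refine ⟨_, (hasDerivAt_pow 2 s).mul h1, ?_⟩
    have h4 : s ^ 2 * K ≤ s ^ 2 * (2 / s * G.Etot s) := by gcongr
    have h5 : s ^ 2 * (2 / s * G.Etot s) = 2 * s * G.Etot s := by field_simp
    simp only [Nat.cast_ofNat, Nat.add_one_sub_one, pow_one]
    linarith
  refine monotoneOn_of_deriv_nonneg (f := fun s => s ^ 2 * G.Etot s) (convex_Ioo Tm Tp)
    (fun s hs => ?_) (fun s hs => ?_) (fun s hs => ?_) ht ht₁ h
  · obtain ⟨D, h1, -⟩ := key s hs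
    exact h1.continuousAt.continuousWithinAt
  · rw [interior_Ioo] at hs
    obtain ⟨D, h1, -⟩ := key s hs
    exact h1.differentiableAt.differentiableWithinAt
  · rw [interior_Ioo] at hs
    obtain ⟨D, h1, h2⟩ := key s hs
    rw [h1.deriv]; exact h2

/-- `α` increases towards the past. -/
lemma α_anti {t t₁ : ℝ} (ht : t ∈ Ioo Tm Tp) (ht₁ : t₁ ∈ Ioo Tm Tp) (hTm : 0 < Tm)
    (h : t ≤ t₁) (θ : ℝ) : G.α t₁ θ ≤ G.α t θ := by
  refine antitoneOn_of_deriv_nonpos (f := fun s => G.α s θ) (convex_Ioo Tm Tp)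
    (fun s hs => (G.sm_α.hasDerivAt_t hs θ).continuousAt.continuousWithinAt) (fun s hs => ?_)
    (fun s hs => ?_) ht ht₁ h
  · rw [interior_Ioo] at hs
    exact (G.sm_α.hasDerivAt_t hs θ).differentiableAt.differentiableWithinAt
  · rw [interior_Ioo] at hs
    have := G.sys.constraint_α s hs θ
    have hs0 : 0 < s := hTm.trans hs.1
    rw [(G.sm_α.hasDerivAt_t hs θ).deriv, this]
    have : 0 ≤ s * (G.α s θ) ^ 2 * Q ^ 2 *
      exp (2 * lam * G.φ s θ + 2 * (G.η s θ - G.U s θ)) := by positivity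
    linarith

lemma exists_α_lower {t₁ : ℝ} (ht₁ : t₁ ∈ Ioo Tm Tp) (hTm : 0 < Tm) :
    ∃ a > 0, ∀ t ∈ Ioc Tm t₁, ∀ θ, a ≤ G.α t θ := by
  obtain ⟨x₀, -, h₀⟩ := (isCompact_Icc (a := (0 : ℝ)) (b := 2 * π)).exists_isMinOn
    (nonempty_Icc.2 Real.two_pi_pos.le) (G.sm_α.continuous_θ ht₁).continuousOn
  refine ⟨G.α t₁ x₀, G.sys.alpha_pos t₁ ht₁ x₀, fun t ht θ => ?_⟩
  obtain ⟨x, hx, hx1, -⟩ := G.per_α.exists_mem_Icc G.per_α t₁ θ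
  calc G.α t₁ x₀ ≤ G.α t₁ x := h₀ hx
    _ = G.α t₁ θ := hx1
    _ ≤ G.α t θ := G.α_anti ⟨ht.1, ht.2.trans_lt ht₁.2⟩ ht₁ hTm ht.2 θ

/-- The spatial logarithmic derivative of `V`; by the momentum constraint the derivatives of
`η` and `α` combine into an energy flux. -/
lemma hasDerivAt_log_V (hTm : 0 < Tm) (hQ : Q ≠ 0) {t : ℝ} (ht : t ∈ Ioo Tm Tp) (θ : ℝ) :
    ∃ L, HasDerivAt (fun x => log (G.V t x)) L θ ∧
      |L| ≤ (2 * t + 2 * |lam| + 2) * ((G.En t θ + 1) / √(G.α t θ)) := by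
  have ht0 : 0 < t := hTm.trans ht.1
  have hα := G.sys.alpha_pos t ht θ
  have h := ((G.sm_α.hasDerivAt_θ ht θ).mul_const (Q ^ 2)).mul
    (((G.sm_φ.hasDerivAt_θ ht θ).const_mul (2 * lam)).add
      (((G.sm_η.hasDerivAt_θ ht θ).sub (G.sm_U.hasDerivAt_θ ht θ)).const_mul 2)).exp
  have h' := HasDerivAt.log (f := fun x => G.V t x) h (G.V_pos hQ ht θ).ne'
  refine ⟨_, h', ?_⟩
  have hη := G.sys.constraint_θ t ht θ
  have hE := G.En_eq ht θ
  have hr := G.sqrt_pos ht θ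
  have h4 := Real.sq_sqrt hα.le
  have e : ∀ L, L = 2 * t * (2 * pt G.U t θ * pth G.U t θ
      + exp (4 * G.U t θ) / (2 * t ^ 2) * (pt G.A t θ * pth G.A t θ)
      + (1 / 2) * (pt G.φ t θ * pth G.φ t θ
          + exp (2 * lam * G.φ t θ) * (pt G.σ t θ * pth G.σ t θ)))
      + 2 * lam * pth G.φ t θ - 2 * pth G.U t θ →
      |L| ≤ (2 * t + 2 * |lam| + 2) * ((G.En t θ + 1) / √(G.α t θ)) := by
    rintro L rfl
    set F := 2 * pt G.U t θ * pth G.U t θ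
      + exp (4 * G.U t θ) / (2 * t ^ 2) * (pt G.A t θ * pth G.A t θ)
      + (1 / 2) * (pt G.φ t θ * pth G.φ t θ
          + exp (2 * lam * G.φ t θ) * (pt G.σ t θ * pth G.σ t θ)) with hF
    have hD : (G.En t θ + 1) / √(G.α t θ) * √(G.α t θ) = G.En t θ + 1 := by field_simp
    set D := (G.En t θ + 1) / √(G.α t θ)
    rw [← h4] at hE
    generalize √(G.α t θ) = r at *
    have pos : ∀ s : ℝ, s ^ 2 = 1 → 0 ≤ (pt G.U t θ + s * (r * pth G.U t θ)) ^ 2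
        + exp (4 * G.U t θ) / (4 * t ^ 2) * (pt G.A t θ + s * (r * pth G.A t θ)) ^ 2
        + (1 / 4) * ((pt G.φ t θ + s * (r * pth G.φ t θ)) ^ 2 +
        exp (2 * lam * G.φ t θ) * (pt G.σ t θ + s * (r * pth G.σ t θ)) ^ 2) := fun s _ => by
      positivity
    have p1 := pos 1 (by norm_num)
    have p2 := pos (-1) (by norm_num)
    have e1 : 0 ≤ G.En t θ + r * F := by
      refine p1.trans_eq ?_
      rw [hE, hF]; field_simp; ring
    have e2 : 0 ≤ G.En t θ - r * F := by
      refine p2.trans_eq ?_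
      rw [hE, hF]; field_simp; ring
    have b1 : |F| ≤ D := by
      refine abs_le_of_sq_le_sq' ?_ ?_ |> abs_le.2
      · have : |r * F| ≤ D * r := by rw [hD]; exact abs_le.2 ⟨by linarith, by linarith⟩
        rw [abs_mul, abs_of_pos hr, mul_comm] at this
        exact sq_le_sq' (by linarith [neg_abs_le F, le_of_mul_le_mul_right this hr])
          ((le_abs_self F).trans (le_of_mul_le_mul_right this hr))
      · refine le_of_mul_le_mul_right ?_ hr
        rw [hD, zero_mul]; linarith [G.En_nonneg t θ]
    have q1 : (r * pth G.U t θ) ^ 2 ≤ G.En t θ := by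
      have : 0 ≤ (pt G.U t θ) ^ 2
        + exp (4 * G.U t θ) / (4 * t ^ 2) * ((pt G.A t θ) ^ 2 + r ^ 2 * (pth G.A t θ) ^ 2)
        + (1 / 4) * ((pt G.φ t θ) ^ 2 + r ^ 2 * (pth G.φ t θ) ^ 2
          + exp (2 * lam * G.φ t θ) *
            ((pt G.σ t θ) ^ 2 + r ^ 2 * (pth G.σ t θ) ^ 2)) := by positivity
      rw [hE]; linarith
    have q2 : (r * pth G.φ t θ) ^ 2 ≤ 4 * G.En t θ := by
      have : 0 ≤ (pt G.U t θ) ^ 2 + r ^ 2 * (pth G.U t θ) ^ 2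
        + exp (4 * G.U t θ) / (4 * t ^ 2) * ((pt G.A t θ) ^ 2 + r ^ 2 * (pth G.A t θ) ^ 2)
        + (1 / 4) * ((pt G.φ t θ) ^ 2
          + exp (2 * lam * G.φ t θ) *
            ((pt G.σ t θ) ^ 2 + r ^ 2 * (pth G.σ t θ) ^ 2)) := by positivity
      rw [hE]; linarith
    have aux : ∀ x c : ℝ, (r * x) ^ 2 ≤ c → c ≤ 4 * G.En t θ → |x| ≤ D := fun x c hc hc' => by
      refine le_of_mul_le_mul_right ?_ hr
      rw [hD, ← abs_of_pos hr, ← abs_mul, mul_comm]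
      refine abs_le_of_sq_le_sq ?_ (by linarith [G.En_nonneg t θ])
      nlinarith [sq_nonneg (G.En t θ - 1)]
    have b2 := aux _ _ q1 (by linarith [G.En_nonneg t θ])
    have b3 := aux _ _ q2 le_rfl
    calc |2 * t * F + 2 * lam * pth G.φ t θ - 2 * pth G.U t θ|
        ≤ |2 * t * F| + |2 * lam * pth G.φ t θ| + |2 * pth G.U t θ| :=
          (abs_sub _ _).trans (by gcongr; exact abs_add_le _ _)
      _ = 2 * t * |F| + 2 * |lam| * |pth G.φ t θ| + 2 * |pth G.U t θ| := by
          simp only [abs_mul, abs_two, abs_of_pos ht0]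
      _ ≤ 2 * t * D + 2 * |lam| * D + 2 * D := by gcongr
      _ = _ := by ring
  refine e _ ?_
  have hη' : pth G.η t θ = t * (2 * pt G.U t θ * pth G.U t θ
      + exp (4 * G.U t θ) / (2 * t ^ 2) * (pt G.A t θ * pth G.A t θ)
      - pth G.α t θ / (2 * t * G.α t θ)
      + (1 / 2) * (pt G.φ t θ * pth G.φ t θ
          + exp (2 * lam * G.φ t θ) * (pt G.σ t θ * pth G.σ t θ))) := by
    rw [← hη]; field_simp
  rw [hη', V]
  simp only [Pi.add_apply, Pi.sub_apply]
  have hexp := (exp_pos (2 * lam * G.φ t θ + 2 * (G.η t θ - G.U t θ))).ne'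
  generalize exp (2 * lam * G.φ t θ + 2 * (G.η t θ - G.U t θ)) = ee at *
  have hα' := hα.ne'
  field_simp
  ring

/-! ### Harnack inequality and integrability of the potential in time -/

lemma hasDerivAt_integral_V {t₁ : ℝ} (ht₁ : t₁ ∈ Ioo Tm Tp) :
    ∀ t ∈ Ioo Tm Tp, HasDerivAt (fun s => ∫ y in t₁..s, G.V y 0) (G.V t 0) t := by
  intro t ht
  have hc : ContinuousOn (fun y => G.V y 0) (Ioo Tm Tp) := fun s hs =>
    (G.sm_V.hasDerivAt_t hs 0).continuousAt.continuousWithinAt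
  refine intervalIntegral.integral_hasDerivAt_right
    (hc.mono (ordConnected_Ioo.uIcc_subset ht₁ ht)).intervalIntegrable
    (hc.stronglyMeasurableAtFilter isOpen_Ioo t ht) (hc.continuousAt (isOpen_Ioo.mem_nhds ht))

/-- Spatial Harnack inequality: on `(Tm, t₁]` the oscillation of `log V` over the circle is
bounded, since the energy controls the integral of its `θ`-derivative. -/
lemma exists_harnack (hTm : 0 < Tm) (hQ : Q ≠ 0) {t₁ : ℝ} (ht₁ : t₁ ∈ Ioo Tm Tp) :
    ∃ K > 0, ∀ t ∈ Ioc Tm t₁, ∀ θ, G.V t θ ≤ K * G.V t 0 ∧ G.V t 0 ≤ K * G.V t θ := by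
  obtain ⟨a, ha, hα⟩ := G.exists_α_lower ht₁ hTm
  set B : ℝ := (2 * t₁ + 2 * |lam| + 2) *
    (t₁ ^ 2 * G.Etot t₁ / Tm ^ 2 + 2 * π * (1 / √a)) with hB
  refine ⟨exp B, exp_pos B, fun t ht θ => ?_⟩
  have ht' : t ∈ Ioo Tm Tp := ⟨ht.1, ht.2.trans_lt ht₁.2⟩
  have ht0 : 0 < t := hTm.trans ht.1
  choose L hL hLb using fun x => G.hasDerivAt_log_V hTm hQ ht' x
  set b : ℝ → ℝ := fun x => (2 * t + 2 * |lam| + 2) * ((G.En t x + 1) / √(G.α t x)) with hb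
  have hbc : Continuous b :=
    continuous_const.mul ((((G.sm_En hTm).continuous_θ ht').add continuous_const).div
      (G.sm_sqrt.continuous_θ ht') fun x => (G.sqrt_pos ht' x).ne')
  have hbn : ∀ x, 0 ≤ b x := fun x => (abs_nonneg _).trans (hLb x)
  have hden : ∀ x, (G.En t x + 1) / √(G.α t x) ≤ G.Den t x + 1 / √a := fun x => by
    have h1 := (G.V_pos hQ ht' x).le
    have h2 := G.sqrt_pos ht' x
    rw [add_div]
    refine add_le_add ?_ ?_
    · rw [Den]; gcongr; linarith
    · exact one_div_le_one_div_of_le (Real.sqrt_pos.2 ha) (Real.sqrt_le_sqrt (hα t ht x))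
  have hint : ∫ x in (0 : ℝ)..(2 * π), b x ≤ B := by
    have hDi := (G.sm_Den hTm).intervalIntegrable ht' 0 (2 * π)
    calc ∫ x in (0 : ℝ)..(2 * π), b x
        ≤ ∫ x in (0 : ℝ)..(2 * π), (2 * t + 2 * |lam| + 2) * (G.Den t x + 1 / √a) := by
          refine intervalIntegral.integral_mono_on Real.two_pi_pos.le
            (hbc.intervalIntegrable _ _)
            ((hDi.add intervalIntegrable_const).const_mul _) fun x _ => ?_
          exact mul_le_mul_of_nonneg_left (hden x) (by positivity)
      _ = (2 * t + 2 * |lam| + 2) * (G.Etot t + 2 * π * (1 / √a)) := by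
          rw [intervalIntegral.integral_const_mul,
            intervalIntegral.integral_add hDi intervalIntegrable_const,
            intervalIntegral.integral_const, Etot]
          simp
      _ ≤ B := by
          have h1 : G.Etot t ≤ t₁ ^ 2 * G.Etot t₁ / Tm ^ 2 := by
            rw [le_div_iff₀ (by positivity)]
            have h2 := G.Etot_le hTm hQ ht' ht₁ ht.2
            have h3 := G.Etot_pos hTm hQ ht'
            have h4 : Tm ^ 2 ≤ t ^ 2 := by have := ht.1.le; gcongr
            nlinarith
          have h5 := G.Etot_pos hTm hQ ht'
          rw [hB]
          have := ht.2
          have ht₁0 : 0 < t₁ := hTm.trans ht₁.1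
          gcongr
  obtain ⟨x, hx, hxV, -⟩ := G.per_V.exists_mem_Icc G.per_V t θ
  rw [← hxV]
  have hosc : |log (G.V t x) - log (G.V t 0)| ≤ B := by
    have h1 : ∀ y ∈ Icc (0 : ℝ) x, log (G.V t y) - log (G.V t 0) ≤ ∫ z in (0 : ℝ)..y, b z := by
      intro y hy
      refine image_le_of_deriv_right_le_deriv_boundary
        (f := fun y => log (G.V t y) - log (G.V t 0)) (f' := L)
        (B := fun y => ∫ z in (0 : ℝ)..y, b z) (B' := b) (a := 0) (b := x)
        (fun z _ => ((hL z).sub_const _).continuousAt.continuousWithinAt)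
        (fun z _ => ((hL z).sub_const _).hasDerivWithinAt) (by simp)
        (fun z _ => (hbc.integral_hasStrictDerivAt 0 z).hasDerivAt.continuousAt.continuousWithinAt)
        (fun z _ => (hbc.integral_hasStrictDerivAt 0 z).hasDerivAt.hasDerivWithinAt)
        (fun z _ => (le_abs_self _).trans (hLb z)) hy
    have h2 : ∀ y ∈ Icc (0 : ℝ) x, log (G.V t 0) - log (G.V t y) ≤ ∫ z in (0 : ℝ)..y, b z := by
      intro y hy
      refine image_le_of_deriv_right_le_deriv_boundary
        (f := fun y => log (G.V t 0) - log (G.V t y)) (f' := fun y => - L y)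
        (B := fun y => ∫ z in (0 : ℝ)..y, b z) (B' := b) (a := 0) (b := x)
        (fun z _ => ((hL z).const_sub _).continuousAt.continuousWithinAt)
        (fun z _ => ((hL z).const_sub _).hasDerivWithinAt) (by simp)
        (fun z _ => (hbc.integral_hasStrictDerivAt 0 z).hasDerivAt.continuousAt.continuousWithinAt)
        (fun z _ => (hbc.integral_hasStrictDerivAt 0 z).hasDerivAt.hasDerivWithinAt)
        (fun z _ => (neg_le_abs _).trans (hLb z)) hy
    have h3 : ∫ z in (0 : ℝ)..x, b z ≤ ∫ z in (0 : ℝ)..(2 * π), b z :=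
      intervalIntegral.integral_mono_interval le_rfl hx.1 hx.2
        (Eventually.of_forall hbn) (hbc.intervalIntegrable _ _)
    have h4 := h1 x ⟨hx.1, le_rfl⟩
    have h5 := h2 x ⟨hx.1, le_rfl⟩
    exact abs_le.2 ⟨by linarith, by linarith⟩
  obtain ⟨h1, h2⟩ := abs_le.1 hosc
  have p1 := G.V_pos hQ ht' x
  have p2 := G.V_pos hQ ht' 0
  constructor
  · rw [← Real.exp_log p1, ← Real.exp_log p2, ← Real.exp_add]
    exact Real.exp_le_exp.2 (by linarith)
  · rw [← Real.exp_log p1, ← Real.exp_log p2, ← Real.exp_add]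
    exact Real.exp_le_exp.2 (by linarith)

/-- The timelike convergence condition bounds the potential term by the energy density. -/
lemma V_le_En (htcc : TCC Q lam Tm Tp G.η G.α G.U G.φ G.σ) {t : ℝ} (ht : t ∈ Ioo Tm Tp) (θ : ℝ) :
    G.V t θ ≤ 8 * G.En t θ := by
  have h := htcc t ht θ
  have hα := G.sys.alpha_pos t ht θ
  have hV : G.V t θ = G.α t θ * Q ^ 2 * exp (2 * (G.η t θ + lam * G.φ t θ - G.U t θ)) := by
    rw [V]; congr 2; ring
  have h0 : 0 ≤ (pt G.U t θ) ^ 2 + G.α t θ * (pth G.U t θ) ^ 2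
      + exp (4 * G.U t θ) / (4 * t ^ 2) *
          ((pt G.A t θ) ^ 2 + G.α t θ * (pth G.A t θ) ^ 2)
      + (1 / 4) * (G.α t θ * (pth G.φ t θ) ^ 2
          + exp (2 * lam * G.φ t θ) * (G.α t θ * (pth G.σ t θ) ^ 2)) := by positivity
  rw [G.En_eq ht θ]
  linarith

/-- The time integral of `V` towards the past is finite: `∫ V/√α dθ` is bounded at `t₁` and
decreases towards the past, up to an exponential factor, at a rate comparable to `V` times
`∫ 𝓔/√α dθ`, which the timelike convergence condition keeps away from `0`. -/
lemma exists_integral_V_bound (hTm : 0 < Tm) (hQ : Q ≠ 0) {t₁ : ℝ} (ht₁ : t₁ ∈ Ioo Tm Tp)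
    (htcc : TCC Q lam Tm Tp G.η G.α G.U G.φ G.σ) :
    ∃ J₀, ∀ t ∈ Ioc Tm t₁, -J₀ ≤ ∫ s in t₁..t, G.V s 0 := by
  obtain ⟨K, hK, hH⟩ := G.exists_harnack hTm hQ ht₁
  have hE1 := G.Etot_pos hTm hQ ht₁
  set C : ℝ := (1 + 4 * lam ^ 2) / Tm with hC
  have hC0 : 0 < C := by positivity
  set c : ℝ := Tm * G.Etot t₁ / (3 * K) with hc
  have hc0 : 0 < c := by positivity
  have smD : Sm Tm Tp (fun t θ => G.V t θ / √(G.α t θ)) :=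
    G.sm_V.div G.sm_sqrt fun _ ht θ => (G.sqrt_pos ht θ).ne'
  set S : ℝ → ℝ := fun t => ∫ x in (0 : ℝ)..(2 * π), G.V t x / √(G.α t x) with hS
  have hS0 : ∀ t ∈ Ioo Tm Tp, 0 ≤ S t := fun t ht =>
    intervalIntegral.integral_nonneg Real.two_pi_pos.le fun x _ =>
      div_nonneg (G.V_pos hQ ht x).le (G.sqrt_pos ht x).le
  have hSd : ∀ t ∈ Ioc Tm t₁, ∃ D, HasDerivAt S D t ∧ c * G.V t 0 - C * S t ≤ D := by
    intro t ht
    have ht' : t ∈ Ioo Tm Tp := ⟨ht.1, ht.2.trans_lt ht₁.2⟩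
    have ht0 : 0 < t := hTm.trans ht.1
    refine ⟨_, smD.hasDerivAt_integral ht', ?_⟩
    have hV0 := G.V_pos hQ ht' 0
    have hi := smD.intervalIntegrable ht' 0 (2 * π)
    have hDi := (G.sm_Den hTm).intervalIntegrable ht' 0 (2 * π)
    have hlow : ∀ x, Tm * (G.V t 0 / K) / 3 * G.Den t x - C * (G.V t x / √(G.α t x))
        ≤ pt (fun t θ => G.V t θ / √(G.α t θ)) t x := by
      intro x
      have hV := G.V_pos hQ ht' x
      have hr := G.sqrt_pos ht' x
      have hEn := G.En_nonneg t x
      have hd := (G.hasDerivAt_V hTm ht' x).div (G.pt_sqrt ht' x) hr.ne'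
      have e : pt (fun t θ => G.V t θ / √(G.α t θ)) t x = _ := hd.deriv
      have e2 : pt (fun t θ => G.V t θ / √(G.α t θ)) t x =
          G.V t x / √(G.α t x) *
            (2 * t * G.En t x + 2 * lam * pt G.φ t x - 2 * pt G.U t x) := by
        rw [e]; field_simp; ring
      rw [e2]
      have hEl : (pt G.U t x) ^ 2 + (1 / 4) * (pt G.φ t x) ^ 2 ≤ G.En t x := by
        have hα := G.sys.alpha_pos t ht' x
        have : 0 ≤ G.α t x * (pth G.U t x) ^ 2
          + exp (4 * G.U t x) / (4 * t ^ 2) *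
              ((pt G.A t x) ^ 2 + G.α t x * (pth G.A t x) ^ 2)
          + (1 / 4) * (G.α t x * (pth G.φ t x) ^ 2
          + exp (2 * lam * G.φ t x) *
            ((pt G.σ t x) ^ 2 + G.α t x * (pth G.σ t x) ^ 2)) := by positivity
        rw [G.En_eq ht' x]; linarith
      have hq : Tm * G.En t x - C ≤
          2 * t * G.En t x + 2 * lam * pt G.φ t x - 2 * pt G.U t x := by
        have h1 : 0 ≤ t * (pt G.U t x - 1 / t) ^ 2 := by positivity
        have h2 : 0 ≤ t / 4 * (pt G.φ t x + 4 * lam / t) ^ 2 := by positivity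
        have e1 : t * (pt G.U t x - 1 / t) ^ 2 =
          t * pt G.U t x ^ 2 - 2 * pt G.U t x + 1 / t := by field_simp; ring
        have e2 : t / 4 * (pt G.φ t x + 4 * lam / t) ^ 2 =
          t / 4 * pt G.φ t x ^ 2 + 2 * lam * pt G.φ t x + 4 * lam ^ 2 / t := by
          field_simp; ring
        have h3 : 1 / t + 4 * lam ^ 2 / t ≤ C := by
          rw [hC, ← add_div]
          have := ht.1.le
          gcongr
        have h4 := mul_le_mul_of_nonneg_left hEl ht0.le
        have h5 := mul_le_mul_of_nonneg_right ht.1.le hEn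
        linarith
      have hV8 := G.V_le_En htcc ht' x
      have hDen : G.Den t x ≤ 3 * (G.En t x / √(G.α t x)) := by
        rw [Den, ← mul_div_assoc]; gcongr; linarith
      have hKV : G.V t 0 / K ≤ G.V t x := by
        rw [div_le_iff₀ hK, mul_comm]; exact (hH t ht x).2
      have hDen0 := (G.Den_pos hQ ht' x).le
      calc Tm * (G.V t 0 / K) / 3 * G.Den t x - C * (G.V t x / √(G.α t x))
          ≤ Tm * G.V t x / 3 * (3 * (G.En t x / √(G.α t x))) - C * (G.V t x / √(G.α t x)) := by
            gcongr
        _ = G.V t x / √(G.α t x) * (Tm * G.En t x - C) := by ring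
        _ ≤ _ := by gcongr
    have hmono := intervalIntegral.integral_mono_on Real.two_pi_pos.le
      ((hDi.const_mul (Tm * (G.V t 0 / K) / 3)).sub (hi.const_mul C))
      (smD.pt.intervalIntegrable ht' 0 (2 * π)) fun x _ => hlow x
    refine le_trans ?_ hmono
    rw [intervalIntegral.integral_sub (hDi.const_mul _) (hi.const_mul C),
      intervalIntegral.integral_const_mul, intervalIntegral.integral_const_mul]
    refine sub_le_sub_right ?_ _
    have hge := G.Etot_ge hTm hQ ht' ht₁ ht.2
    calc c * G.V t 0 = Tm * (G.V t 0 / K) / 3 * G.Etot t₁ := by rw [hc]; field_simp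
      _ ≤ _ := mul_le_mul_of_nonneg_left hge (by positivity)
  have hJ := G.hasDerivAt_integral_V ht₁
  refine ⟨S t₁ * exp (C * t₁) / c, fun t ht => ?_⟩
  have ht' : t ∈ Ioo Tm Tp := ⟨ht.1, ht.2.trans_lt ht₁.2⟩
  have hmon : MonotoneOn (fun s => S s * exp (C * s) - c * ∫ y in t₁..s, G.V y 0) (Ioc Tm t₁) := by
    have key : ∀ s ∈ Ioc Tm t₁, ∃ D,
        HasDerivAt (fun s => S s * exp (C * s) - c * ∫ y in t₁..s, G.V y 0) D s ∧ 0 ≤ D := by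
      intro s hs
      have hs' : s ∈ Ioo Tm Tp := ⟨hs.1, hs.2.trans_lt ht₁.2⟩
      obtain ⟨D, hD, hDl⟩ := hSd s hs
      refine ⟨_, (hD.mul ((hasDerivAt_id s).const_mul C).exp).sub ((hJ s hs').const_mul c), ?_⟩
      have h1 : (1 : ℝ) ≤ exp (C * s) := Real.one_le_exp (by
        have := hTm.trans hs.1; positivity)
      have h2 := (G.V_pos hQ hs' 0).le
      have h3 := mul_le_mul_of_nonneg_right hDl (exp_pos (C * s)).le
      have h4 : c * G.V s 0 * 1 ≤ c * G.V s 0 * exp (C * s) := by gcongr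
      simp only [id, mul_one]
      nlinarith
    refine monotoneOn_of_deriv_nonneg (convex_Ioc Tm t₁) (fun s hs => ?_) (fun s hs => ?_)
      (fun s hs => ?_)
    · obtain ⟨D, h1, -⟩ := key s hs
      exact h1.continuousAt.continuousWithinAt
    · obtain ⟨D, h1, -⟩ := key s (interior_subset hs)
      exact h1.differentiableAt.differentiableWithinAt
    · obtain ⟨D, h1, h2⟩ := key s (interior_subset hs)
      rw [h1.deriv]; exact h2
  have h := hmon ht ⟨ht₁.1, le_rfl⟩ ht.2
  simp only [intervalIntegral.integral_same, mul_zero, sub_zero] at h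
  have h0 := mul_nonneg (hS0 t ht') (exp_pos (C * t)).le
  rw [neg_le, le_div_iff₀ hc0]
  linarith

/-! ### Bounds on the null energies and on the fields -/

/-- Lower bound for the right-hand side of the transport equation of the null energy. -/
lemma Es_transport_ge (hTm : 0 < Tm) (hQ : Q ≠ 0) {t₁ : ℝ} (ht₁ : t₁ ∈ Ioo Tm Tp) {s : ℝ}
    (hs : s ^ 2 = 1) {t : ℝ} (ht : t ∈ Ioc Tm t₁) (θ : ℝ) :
    -(G.V t θ * ((t₁ + 2 + lam ^ 2) * (G.Es s t θ + 1)))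
        - (2 / Tm) * (G.Es s t θ + G.Es (-s) t θ)
      ≤ pt (G.Es s) t θ - s * √(G.α t θ) * pth (G.Es s) t θ := by
  have ht' : t ∈ Ioo Tm Tp := ⟨ht.1, ht.2.trans_lt ht₁.2⟩
  have ht0 : 0 < t := hTm.trans ht.1
  rw [G.Es_transport hTm hs ht' θ]
  have hV := (G.V_pos hQ ht' θ).le
  have hE := G.Es_nonneg s t θ
  have hE' := G.Es_nonneg (-s) t θ
  have hw4 : 0 ≤ exp (4 * G.U t θ) / (4 * t ^ 2) := by positivity
  have hw2 : 0 ≤ exp (2 * lam * G.φ t θ) := (exp_pos _).le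
  have hEs : G.Es s t θ = Nd G.α s G.U t θ ^ 2
    + exp (4 * G.U t θ) / (4 * t ^ 2) * Nd G.α s G.A t θ ^ 2
    + (1 / 4) * (Nd G.α s G.φ t θ ^ 2 + exp (2 * lam * G.φ t θ) * Nd G.α s G.σ t θ ^ 2) := rfl
  have hEs' : G.Es (-s) t θ = Nd G.α (-s) G.U t θ ^ 2
    + exp (4 * G.U t θ) / (4 * t ^ 2) * Nd G.α (-s) G.A t θ ^ 2
    + (1 / 4) * (Nd G.α (-s) G.φ t θ ^ 2
      + exp (2 * lam * G.φ t θ) * Nd G.α (-s) G.σ t θ ^ 2) := rfl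
  generalize exp (4 * G.U t θ) / (4 * t ^ 2) = w4 at *
  generalize exp (2 * lam * G.φ t θ) = w2 at *
  generalize Nd G.α s G.U t θ = u at *
  generalize Nd G.α (-s) G.U t θ = u' at *
  generalize Nd G.α s G.A t θ = a at *
  generalize Nd G.α (-s) G.A t θ = a' at *
  generalize Nd G.α s G.φ t θ = p at *
  generalize Nd G.α (-s) G.φ t θ = p' at *
  generalize Nd G.α s G.σ t θ = q at *
  generalize Nd G.α (-s) G.σ t θ = q' at *
  generalize G.Es s t θ = E at *
  generalize G.Es (-s) t θ = E' at *
  generalize G.V t θ = v at *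
  have hwa : 0 ≤ w4 * a ^ 2 := by positivity
  have hwq : 0 ≤ w2 * q ^ 2 := by positivity
  have hsrc : -((t₁ + 2 + lam ^ 2) * (E + 1)) ≤ -t * E + (u - lam * p) / 2 := by
    have h1 : t * E ≤ t₁ * E := mul_le_mul_of_nonneg_right ht.2 hE
    have h2 : 0 ≤ lam ^ 2 * E := by positivity
    have h3 : 0 < t₁ := ht0.trans_le ht.2
    nlinarith [sq_nonneg (u + 1), sq_nonneg (p / 2 - lam), sq_nonneg lam]
  have hquad : u * (u + u') + w4 * (a * (a - a')) + (1 / 4) * (p * (p + p') + w2 * (q * (q + q')))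
      ≤ 2 * (E + E') := by
    have hA := mul_nonneg hw4 (sq_nonneg (a + a'))
    have hS := mul_nonneg hw2 (sq_nonneg (q - q'))
    nlinarith [sq_nonneg (u - u'), sq_nonneg (p - p')]
  have h1 := mul_le_mul_of_nonneg_left hsrc hV
  have h2 : (1 / t) * (u * (u + u') + w4 * (a * (a - a')) +
      (1 / 4) * (p * (p + p') + w2 * (q * (q + q')))) ≤ (2 / Tm) * (E + E') := by
    calc _ ≤ (1 / t) * (2 * (E + E')) := mul_le_mul_of_nonneg_left hquad (by positivity)
      _ ≤ (1 / Tm) * (2 * (E + E')) := by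
        have := ht.1.le
        gcongr
      _ = _ := by ring
  linarith

/-- The null energy densities are bounded up to the past boundary. The weight
`exp (2 (2 t / Tm + C₃ ∫ V dt))` absorbs the sources in the transport equations, and it stays away
from `0` because the time integral of `V` is finite. -/
lemma exists_Es_bound (hTm : 0 < Tm) (hQ : Q ≠ 0) {t₁ : ℝ} (ht₁ : t₁ ∈ Ioo Tm Tp)
    (htcc : TCC Q lam Tm Tp G.η G.α G.U G.φ G.σ) :
    ∃ B, ∀ t ∈ Ioc Tm t₁, ∀ θ, G.Es 1 t θ ≤ B ∧ G.Es (-1) t θ ≤ B := by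
  obtain ⟨K, hK, hH⟩ := G.exists_harnack hTm hQ ht₁
  obtain ⟨J₀, hJ₀⟩ := G.exists_integral_V_bound hTm hQ ht₁ htcc
  have ht₁0 : 0 < t₁ := hTm.trans ht₁.1
  have hJ := G.hasDerivAt_integral_V ht₁
  obtain ⟨C₃, hC₃⟩ : ∃ C₃, C₃ = (t₁ + 2 + lam ^ 2) * K := ⟨_, rfl⟩
  have hC₃0 : 0 < C₃ := by rw [hC₃]; positivity
  set w : ℝ → ℝ := fun t => exp (2 * (2 / Tm * t + C₃ * ∫ y in t₁..t, G.V y 0)) with hw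
  have hw0 : ∀ t, 0 < w t := fun t => exp_pos _
  have hwd : ∀ t ∈ Ioo Tm Tp, HasDerivAt w (2 * (2 / Tm + C₃ * G.V t 0) * w t) t := by
    intro t ht
    have h := ((((hasDerivAt_id t).const_mul (2 / Tm)).add ((hJ t ht).const_mul C₃)).const_mul
      2).exp
    exact h.congr_deriv (by simp only [hw, id, Pi.add_apply]; ring)
  have hcont : ∀ s, ContinuousOn (fun p : ℝ × ℝ => (G.Es s p.1 p.2 + 1) * w p.1)
      (Ioo Tm Tp ×ˢ (univ : Set ℝ)) := fun s =>
    ((G.sm_Es hTm s).continuousOn.add continuousOn_const).mul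
      (ContinuousOn.comp (g := w) (t := Ioo Tm Tp)
        (fun t ht => (hwd t ht).continuousAt.continuousWithinAt) continuousOn_fst fun p hp => hp.1)
  have hper : ∀ s, Per (fun t θ => (G.Es s t θ + 1) * w t) := fun s t θ => by
    simp only [G.per_Es s t θ]
  have hder : ∀ s : ℝ, s ^ 2 = 1 → ∀ t ∈ Ioo Tm t₁, ∀ θ,
      (G.Es (-s) t θ + 1) * w t ≤ (G.Es s t θ + 1) * w t → ∃ a b k,
        HasDerivAt (fun τ => (G.Es s τ θ + 1) * w τ) a t ∧
        HasDerivAt (fun x => (G.Es s t x + 1) * w t) b θ ∧ 0 < a + k * b := by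
    intro s hs t ht θ hle
    have ht' : t ∈ Ioo Tm Tp := ⟨ht.1, ht.2.trans ht₁.2⟩
    have ht'' : t ∈ Ioc Tm t₁ := ⟨ht.1, ht.2.le⟩
    refine ⟨_, _, -(s * √(G.α t θ)),
      (((G.sm_Es hTm s).hasDerivAt_t ht' θ).add_const 1).mul (hwd t ht'),
      (((G.sm_Es hTm s).hasDerivAt_θ ht' θ).add_const 1).mul_const (w t), ?_⟩
    have hEle : G.Es (-s) t θ ≤ G.Es s t θ := by
      have := le_of_mul_le_mul_right hle (hw0 t); linarith
    have hT := G.Es_transport_ge hTm hQ ht₁ hs ht'' θ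
    have hE := G.Es_nonneg s t θ
    have hv := (G.V_pos hQ ht' 0).le
    have hVK : G.V t θ * ((t₁ + 2 + lam ^ 2) * (G.Es s t θ + 1)) ≤
        C₃ * G.V t 0 * (G.Es s t θ + 1) := by
      have := mul_le_mul_of_nonneg_right (hH t ht'' θ).1
        (by positivity : 0 ≤ (t₁ + 2 + lam ^ 2) * (G.Es s t θ + 1))
      refine this.trans_eq ?_
      rw [hC₃]; ring
    have hEE : (2 / Tm) * (G.Es s t θ + G.Es (-s) t θ) ≤ (2 / Tm) * (2 * G.Es s t θ) :=
      mul_le_mul_of_nonneg_left (by linarith) (by positivity)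
    have hpos : 0 < 2 / Tm := by positivity
    have hCv : 0 ≤ C₃ * G.V t 0 * (G.Es s t θ + 1) := by positivity
    have key : 0 < (pt (G.Es s) t θ - s * √(G.α t θ) * pth (G.Es s) t θ
        + 2 * (2 / Tm + C₃ * G.V t 0) * (G.Es s t θ + 1)) * w t := by
      refine mul_pos ?_ (hw0 t)
      linarith
    refine key.trans_eq ?_
    ring
  obtain ⟨B₁, hB₁⟩ := (G.sm_Es hTm 1).exists_slice_bound (G.per_Es 1) ht₁
  obtain ⟨B₂, hB₂⟩ := (G.sm_Es hTm (-1)).exists_slice_bound (G.per_Es (-1)) ht₁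
  have hmp := max_principle (F₁ := fun t θ => (G.Es 1 t θ + 1) * w t)
    (F₂ := fun t θ => (G.Es (-1) t θ + 1) * w t) ht₁ (hcont 1) (hcont (-1)) (hper 1) (hper (-1))
    (hder 1 (by norm_num))
    (fun t ht θ hle => hder (-1) (by norm_num) t ht θ (by rw [neg_neg]; exact hle))
    (M := (max B₁ B₂ + 1) * w t₁)
    (fun θ => mul_le_mul_of_nonneg_right
      (by linarith [le_abs_self (G.Es 1 t₁ θ), hB₁ θ, le_max_left B₁ B₂]) (hw0 t₁).le)
    (fun θ => mul_le_mul_of_nonneg_right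
      (by linarith [le_abs_self (G.Es (-1) t₁ θ), hB₂ θ, le_max_right B₁ B₂]) (hw0 t₁).le)
  refine ⟨(max B₁ B₂ + 1) * w t₁ / exp (-(2 * C₃ * J₀)), fun t ht θ => ?_⟩
  have hwl : exp (-(2 * C₃ * J₀)) ≤ w t := by
    refine Real.exp_le_exp.2 ?_
    have h1 := mul_le_mul_of_nonneg_left (hJ₀ t ht) hC₃0.le
    have h2 : 0 ≤ 2 / Tm * t := by have := hTm.trans ht.1; positivity
    linarith
  have fin : ∀ E : ℝ, 0 ≤ E → (E + 1) * w t ≤ (max B₁ B₂ + 1) * w t₁ →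
      E ≤ (max B₁ B₂ + 1) * w t₁ / exp (-(2 * C₃ * J₀)) := by
    intro E hE h
    rw [le_div_iff₀ (exp_pos _)]
    calc E * exp (-(2 * C₃ * J₀)) ≤ E * w t := mul_le_mul_of_nonneg_left hwl hE
      _ ≤ (E + 1) * w t := mul_le_mul_of_nonneg_right (by linarith) (hw0 t).le
      _ ≤ _ := h
  exact ⟨fin _ (G.Es_nonneg 1 t θ) (hmp t ht θ).1, fin _ (G.Es_nonneg (-1) t θ) (hmp t ht θ).2⟩

/-- A field for which `(∂ₜf)² + α (∂_θ f)²` is bounded up to the past boundary is bounded there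
together with its first derivatives, since `α` is bounded below. -/
lemma bounded_of_weighted {f : ℝ → ℝ → ℝ} (hf : Sm Tm Tp f) (hp : Per f) {t₁ : ℝ}
    (ht₁ : t₁ ∈ Ioo Tm Tp) (hTm : 0 < Tm) {c B : ℝ} (hc : 0 < c)
    (h : ∀ t ∈ Ioc Tm t₁, ∀ θ, c * ((pt f t θ) ^ 2 + G.α t θ * (pth f t θ) ^ 2) ≤ B) :
    ∀ g ∈ [f, pt f, pth f], ∃ C, ∀ t ∈ Ioc Tm t₁, ∀ θ, |g t θ| ≤ C := by
  obtain ⟨a, ha, hα⟩ := G.exists_α_lower ht₁ hTm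
  have h1 : ∃ C, ∀ t ∈ Ioc Tm t₁, ∀ θ, |pt f t θ| ≤ C := by
    refine ⟨√(B / c), fun t ht θ => Real.abs_le_sqrt ?_⟩
    rw [le_div_iff₀ hc]
    have h2 := h t ht θ
    have h3 : 0 ≤ c * (G.α t θ * (pth f t θ) ^ 2) := by
      have := ha.le.trans (hα t ht θ); positivity
    linarith
  have h2 : ∃ C, ∀ t ∈ Ioc Tm t₁, ∀ θ, |pth f t θ| ≤ C := by
    refine ⟨√(B / (c * a)), fun t ht θ => Real.abs_le_sqrt ?_⟩
    rw [le_div_iff₀ (by positivity)]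
    have h2 := h t ht θ
    have h3 : 0 ≤ c * (pt f t θ) ^ 2 := by positivity
    have h4 := mul_le_mul_of_nonneg_left (hα t ht θ) (by positivity : 0 ≤ c * (pth f t θ) ^ 2)
    linarith
  intro g hg
  simp only [List.mem_cons, List.not_mem_nil, or_false] at hg
  rcases hg with rfl | rfl | rfl
  · exact hf.exists_bound_of_pt hp ht₁ h1
  · exact h1
  · exact h2

/-- Each of the fields `U, A, φ, σ` and each of their first derivatives is bounded up to the past
boundary. -/
lemma fields_bounded (hTm : 0 < Tm) (hQ : Q ≠ 0) {t₁ : ℝ} (ht₁ : t₁ ∈ Ioo Tm Tp)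
    (htcc : TCC Q lam Tm Tp G.η G.α G.U G.φ G.σ) :
    ∀ f ∈ [G.U, G.A, G.φ, G.σ], ∀ g ∈ [f, pt f, pth f],
      ∃ C, ∀ t ∈ Ioc Tm t₁, ∀ θ, |g t θ| ≤ C := by
  obtain ⟨B, hB⟩ := G.exists_Es_bound hTm hQ ht₁ htcc
  have ht₁0 : 0 < t₁ := hTm.trans ht₁.1
  have hEn : ∀ t ∈ Ioc Tm t₁, ∀ θ,
      (pt G.U t θ) ^ 2 + G.α t θ * (pth G.U t θ) ^ 2 ≤ B ∧
      exp (4 * G.U t θ) / (4 * t ^ 2) *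
        ((pt G.A t θ) ^ 2 + G.α t θ * (pth G.A t θ) ^ 2) ≤ B ∧
      (1 / 4) * ((pt G.φ t θ) ^ 2 + G.α t θ * (pth G.φ t θ) ^ 2) ≤ B ∧
      (1 / 4) * (exp (2 * lam * G.φ t θ) *
        ((pt G.σ t θ) ^ 2 + G.α t θ * (pth G.σ t θ) ^ 2)) ≤ B := by
    intro t ht θ
    have ht' : t ∈ Ioo Tm Tp := ⟨ht.1, ht.2.trans_lt ht₁.2⟩
    have hα := (G.sys.alpha_pos t ht' θ).le
    have hle : G.En t θ ≤ B := by
      rw [En]; linarith [(hB t ht θ).1, (hB t ht θ).2]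
    rw [G.En_eq ht' θ] at hle
    have p1 : 0 ≤ (pt G.U t θ) ^ 2 + G.α t θ * (pth G.U t θ) ^ 2 := by positivity
    have p2 : 0 ≤ exp (4 * G.U t θ) / (4 * t ^ 2) *
        ((pt G.A t θ) ^ 2 + G.α t θ * (pth G.A t θ) ^ 2) := by positivity
    have p3 : 0 ≤ (pt G.φ t θ) ^ 2 + G.α t θ * (pth G.φ t θ) ^ 2 := by positivity
    have p4 : 0 ≤ exp (2 * lam * G.φ t θ) *
        ((pt G.σ t θ) ^ 2 + G.α t θ * (pth G.σ t θ) ^ 2) := by positivity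
    refine ⟨?_, ?_, ?_, ?_⟩ <;> linarith
  have bU := G.bounded_of_weighted G.sm_U G.per_U ht₁ hTm one_pos
    (fun t ht θ => by rw [one_mul]; exact (hEn t ht θ).1)
  have bφ := G.bounded_of_weighted G.sm_φ G.per_φ ht₁ hTm (by norm_num : (0 : ℝ) < 1 / 4)
    (fun t ht θ => (hEn t ht θ).2.2.1)
  obtain ⟨CU, hCU⟩ := bU G.U (by simp)
  obtain ⟨Cφ, hCφ⟩ := bφ G.φ (by simp)
  -- The weights of `A` and `σ` are bounded below since `U` and `φ` are bounded.
  have bA := G.bounded_of_weighted G.sm_A G.per_A ht₁ hTm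
    (by positivity : 0 < exp (-(4 * CU)) / (4 * t₁ ^ 2))
    (fun t ht θ => by
      have ht' : t ∈ Ioo Tm Tp := ⟨ht.1, ht.2.trans_lt ht₁.2⟩
      have hα := (G.sys.alpha_pos t ht' θ).le
      have ht0 := hTm.trans ht.1
      have h1 := (abs_le.1 (hCU t ht θ)).1
      have h2 := ht.2
      refine le_trans ?_ (hEn t ht θ).2.1
      gcongr
      linarith)
  have bσ := G.bounded_of_weighted G.sm_σ G.per_σ ht₁ hTm
    (by positivity : 0 < (1 / 4) * exp (-(2 * |lam| * Cφ)))
    (fun t ht θ => by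
      have ht' : t ∈ Ioo Tm Tp := ⟨ht.1, ht.2.trans_lt ht₁.2⟩
      have hα := (G.sys.alpha_pos t ht' θ).le
      have h1 : -(|lam| * Cφ) ≤ lam * G.φ t θ := by
        have h2 := neg_abs_le (lam * G.φ t θ)
        rw [abs_mul] at h2
        have h3 := mul_le_mul_of_nonneg_left (hCφ t ht θ) (abs_nonneg lam)
        linarith
      refine le_trans ?_ (hEn t ht θ).2.2.2
      rw [mul_assoc]
      gcongr
      linarith)
  intro f hf
  simp only [List.mem_cons, List.not_mem_nil, or_false] at hf
  rcases hf with rfl | rfl | rfl | rfl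
  · exact bU
  · exact bA
  · exact bφ
  · exact bσ

end GowdySolution

end Transport

/-- Finitely many bounded quantities have a common bound. -/
lemma List.exists_common_bound {ι : Type*} (P : ι → ℝ → Prop)
    (hP : ∀ i C C', C ≤ C' → P i C → P i C') :
    ∀ L : List ι, (∀ i ∈ L, ∃ C, P i C) → ∃ C, ∀ i ∈ L, P i C
  | [], _ => ⟨0, by simp⟩
  | i :: L, h => by
    obtain ⟨C₁, h₁⟩ := h i (by simp)
    obtain ⟨C₂, h₂⟩ := List.exists_common_bound P hP L fun j hj => h j (by simp [hj])
    refine ⟨max C₁ C₂, fun j hj => ?_⟩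
    rcases List.mem_cons.1 hj with rfl | hj
    · exact hP _ _ _ (le_max_left _ _) h₁
    · exact hP _ _ _ (le_max_right _ _) (h₂ j hj)

theorem first_derivatives_bounded_past (Q lam Tm Tp t_i : ℝ) (hQ : Q ≠ 0) (hTm : 0 < Tm) (hti : Tm < t_i)
    (hTp : t_i < Tp) (G : GowdySolution Q lam Tm Tp)
    (lamBar : ℝ) (hlam : |lam| ≤ lamBar) (hlamBar : lamBar < 1 / 2)
    (htcc : TCC Q lam Tm Tp G.η G.α G.U G.φ G.σ) :
    ∃ C : ℝ, ∀ f ∈ ([G.U, G.A, G.φ, G.σ] : List (ℝ → ℝ → ℝ)),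
      ∀ g ∈ ([f, pt f, pth f] : List (ℝ → ℝ → ℝ)),
        ∀ t ∈ Ioc Tm t_i, ∀ θ : ℝ, |g t θ| ≤ C := by
  refine List.exists_common_bound
    (fun f C => ∀ g ∈ ([f, pt f, pth f] : List (ℝ → ℝ → ℝ)),
      ∀ t ∈ Ioc Tm t_i, ∀ θ : ℝ, |g t θ| ≤ C)
    (fun f C C' hCC h g hg t ht θ => (h g hg t ht θ).trans hCC) _ fun f hf => ?_
  exact List.exists_common_bound
    (fun (g : ℝ → ℝ → ℝ) C => ∀ t ∈ Ioc Tm t_i, ∀ θ : ℝ, |g t θ| ≤ C)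
    (fun g C C' hCC h t ht θ => (h t ht θ).trans hCC) _
    fun g hg => G.fields_bounded hTm hQ ⟨hti, hTp⟩ htcc f hf g hg

end
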